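/- Let n ≥ 1 and n/(n+1) < q < p ≤ 1, fix ψ as in the context, and let Ω ⊆ ℝⁿ be a bounded domain whose complement is uniformly q-fat, i.e. there is c > 0 such that cap_q( Ωᶜ ∩ cl(B(x,r)) ; B(x,2r) ) ≥ c·r^{n−q} for every x ∈ Ωᶜ and every r > 0. Then there is a finite constant C = C(p,q,n,c,Ω,ψ) such that every smooth u : ℝⁿ → ℝ with compact support contained in Ω satisfies ∫_Ω ( |u(x)| / dist(x,∂Ω) )^p dx ≤ C · Σ_{j=1}^n ‖ sup_{t>0} |(∂_j u) * ψ_t| ‖_{L^p(ℝⁿ)}^p. -/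

import Mathlib

open MeasureTheory Metric Set ENNReal NNReal

noncomputable section

/-- The partial derivative `∂_j φ` in the `j`-th coordinate direction. -/
def pderivIdx (n : ℕ) (j : Fin n) (φ : EuclideanSpace ℝ (Fin n) → ℝ)
    (x : EuclideanSpace ℝ (Fin n)) : ℝ :=
  fderiv ℝ φ x (EuclideanSpace.single j 1)

/-- `sup_{t>0} |(∂_j u) * ψ_t|(x)`, the smooth maximal function of the partial
derivative of a differentiable function `u`, where `ψ_t(z) = t^{-n} ψ(z/t)`. -/
def convMax (n : ℕ) (ψ u : EuclideanSpace ℝ (Fin n) → ℝ) (j : Fin n)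
    (x : EuclideanSpace ℝ (Fin n)) : ℝ≥0∞ :=
  ⨆ (t : {s : ℝ // 0 < s}),
    ENNReal.ofReal |∫ y, pderivIdx n j u y * ((t.1⁻¹) ^ n * ψ (t.1⁻¹ • (x - y)))|

/-- The Hardy `q`-capacity of `K` relative to `U`:
`cap_q(K;U) = inf { Σ_j ‖sup_{t>0} |(∂_jφ) * ψ_t|‖_{L^q}^q : φ ∈ C_0^∞(U), φ ≥ 1 on K }`. -/
def hardyCap (n : ℕ) (ψ : EuclideanSpace ℝ (Fin n) → ℝ) (q : ℝ)
    (K U : Set (EuclideanSpace ℝ (Fin n))) : ℝ≥0∞ :=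
  sInf {r : ℝ≥0∞ | ∃ φ : EuclideanSpace ℝ (Fin n) → ℝ,
    ContDiff ℝ (⊤ : ℕ∞) φ ∧ HasCompactSupport φ ∧ tsupport φ ⊆ U ∧ (∀ x ∈ K, 1 ≤ φ x) ∧
    r = ∑ j : Fin n, ∫⁻ x, convMax n ψ φ j x ^ q}

/-!
Calderón's sharp maximal function `N u (x) = sup_t t⁻¹ ⨍_{B(x,t)} |u - u(x)|` plays the role of
`|∇u|`. Write `M` for the Hardy–Littlewood maximal operator and `M_σ f = (M (f ^ σ)) ^ (1/σ)`.

Let `x ∈ Ω`, let `a ∉ Ω` be a nearest boundary point and `r = |x - a|`. For a cut-off `ζ` of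
`B(a, r)`, the function `ζ (1 - u / u(x))` competes in the capacity of `Ωᶜ ∩ B(a, r)`. Its Hardy
energy is at most `C |u(x)| ^ (-q) r ^ n (M_q (N u) (x)) ^ q`, because `N` is stable under cut-off
and its tail off the support is `q`-integrable for `q > n/(n+1)`. Fatness of `Ωᶜ` turns this into
`|u(x)| / r ≤ C M_q (N u) (x)`, and `M_q` is bounded on `L^p` since `q < p`.

It remains to bound `N u` in `L^p` by `G = ∑_j sup_t |∂_j u * ψ_t|`. Replacing `u` by `u * ψ_{εt}`
in the average over `B(x, t)` costs `C ε ^ (1 - n (1 - σ) / σ) M_σ (N u)`, with a positive exponent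
when `n/(n+1) < σ`. The gradient of `u * ψ_{εt}` varies on the scale `ρ t` by at most `C_ε ρ N u`,
so it is bounded by that plus `C_ρ M_σ G`. Choosing first `ε` and then `ρ` small gives
`N u ≤ η M_σ (N u) + C M_σ G` with `η` as small as desired, and for `σ < p` the first term is
absorbed in `L^p`.
-/

open Filter Topology
open Module (finrank)

local notation "𝔼" n:max => EuclideanSpace ℝ (Fin n)

section SetLAverage

variable {α : Type*} [MeasurableSpace α] {ν : Measure α} {s : Set α}

lemma setLAverage_mono_on (hs : MeasurableSet s) {f g : α → ℝ≥0∞} (hfg : ∀ x ∈ s, f x ≤ g x) :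
    ⨍⁻ x in s, f x ∂ν ≤ ⨍⁻ x in s, g x ∂ν := by
  simp only [setLAverage_eq]
  gcongr ?_ / _
  exact setLIntegral_mono' hs hfg

lemma setLAverage_const_mul {c : ℝ≥0∞} (hc : c ≠ ∞) (f : α → ℝ≥0∞) :
    ⨍⁻ x in s, c * f x ∂ν = c * ⨍⁻ x in s, f x ∂ν := by
  rw [setLAverage_eq, setLAverage_eq, lintegral_const_mul' _ _ hc, mul_div_assoc]

lemma setLAverage_add {f : α → ℝ≥0∞} (hf : Measurable f) (g : α → ℝ≥0∞) :
    ⨍⁻ x in s, (f x + g x) ∂ν = ⨍⁻ x in s, f x ∂ν + ⨍⁻ x in s, g x ∂ν := by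
  simp only [setLAverage_eq']
  exact lintegral_add_left hf g

lemma setLAverage_add_const (hs₀ : ν s ≠ 0) (hs : ν s ≠ ∞) (f : α → ℝ≥0∞) (c : ℝ≥0∞) :
    ⨍⁻ x in s, (f x + c) ∂ν = ⨍⁻ x in s, f x ∂ν + c := by
  rw [setLAverage_eq, setLAverage_eq, lintegral_add_right _ measurable_const, ENNReal.add_div,
    setLIntegral_const, ENNReal.mul_div_cancel_right hs₀ hs]

end SetLAverage

section Ball

lemma setLAverage_closedBall_eq_setLAverage_zero {E : Type*} [NormedAddCommGroup E]
    [MeasurableSpace E] [BorelSpace E] {μ : Measure E} [μ.IsAddHaarMeasure] (f : E → ℝ≥0∞) (x : E)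
    (t : ℝ) :
    ⨍⁻ y in closedBall x t, f y ∂μ = ⨍⁻ z in closedBall 0 t, f (x + z) ∂μ := by
  rw [setLAverage_eq, setLAverage_eq, Measure.addHaar_closedBall_center μ x,
    ← (measurePreserving_add_left μ x).setLIntegral_comp_preimage_emb
      (MeasurableEquiv.addLeft x).measurableEmbedding, preimage_add_closedBall, sub_self]

variable {E : Type*} [NormedAddCommGroup E] [NormedSpace ℝ E] [FiniteDimensional ℝ E]
  [MeasurableSpace E] {μ : Measure E} [μ.IsAddHaarMeasure]

lemma setLAverage_closedBall_const {s : ℝ} (hs : 0 < s) (x : E) (c : ℝ≥0∞) :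
    ⨍⁻ _ in closedBall x s, c ∂μ = c :=
  setLAverage_const (measure_closedBall_pos μ x hs).ne' measure_closedBall_lt_top.ne c

variable [BorelSpace E]

lemma addHaar_closedBall_eq_div_pow_mul {s R : ℝ} (hs : 0 < s) (hR : 0 < R) (x y : E) :
    μ (closedBall x R) = ENNReal.ofReal ((R / s) ^ finrank ℝ E) * μ (closedBall y s) := by
  rw [Measure.addHaar_closedBall_center μ y s, ← Measure.addHaar_closedBall_mul_of_pos μ x
    (div_pos hR hs), div_mul_cancel₀ R hs.ne']

lemma setLAverage_closedBall_le_of_forall_le {s : ℝ} (hs : 0 < s) {x : E} {f : E → ℝ≥0∞}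
    {c : ℝ≥0∞} (hf : ∀ y ∈ closedBall x s, f y ≤ c) : ⨍⁻ y in closedBall x s, f y ∂μ ≤ c :=
  (setLAverage_mono_on measurableSet_closedBall hf).trans (setLAverage_closedBall_const hs x c).le

lemma le_setLAverage_closedBall_of_forall_le {s : ℝ} (hs : 0 < s) {x : E} {f : E → ℝ≥0∞}
    {c : ℝ≥0∞} (hf : ∀ y ∈ closedBall x s, c ≤ f y) : c ≤ ⨍⁻ y in closedBall x s, f y ∂μ :=
  (setLAverage_closedBall_const hs x c).ge.trans (setLAverage_mono_on measurableSet_closedBall hf)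

lemma setLAverage_closedBall_le_mul {s R : ℝ} {x y : E} (hs : 0 < s) (hR : dist y x + s ≤ R)
    (f : E → ℝ≥0∞) :
    ⨍⁻ z in closedBall y s, f z ∂μ ≤
      ENNReal.ofReal ((R / s) ^ finrank ℝ E) * ⨍⁻ z in closedBall x R, f z ∂μ := by
  have hR_pos : 0 < R := by linarith [dist_nonneg (x := y) (y := x)]
  have hk : ENNReal.ofReal ((R / s) ^ finrank ℝ E) ≠ 0 := by simpa using by positivity
  rw [setLAverage_eq, setLAverage_eq, addHaar_closedBall_eq_div_pow_mul hs hR_pos x y,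
    ← mul_div_assoc, ENNReal.mul_div_mul_left _ _ hk ofReal_ne_top]
  gcongr
  exact closedBall_subset_closedBall' (by rwa [add_comm])

lemma setLAverage_closedBall_le_mul_of_eqOn_zero {ρ t : ℝ} {a : E} (hρ : 0 < ρ) (ht : 0 < t)
    {f : E → ℝ≥0∞} (hf : ∀ y ∉ closedBall a ρ, f y = 0) (x : E) :
    ⨍⁻ y in closedBall x t, f y ∂μ ≤
      ENNReal.ofReal ((ρ / t) ^ finrank ℝ E) * ⨍⁻ y in closedBall a ρ, f y ∂μ := by
  have hint : ∫⁻ y in closedBall x t, f y ∂μ ≤ ∫⁻ y in closedBall a ρ, f y ∂μ := by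
    rw [setLIntegral_eq_of_support_subset fun y hy ↦ not_imp_comm.1 (hf y) hy]
    exact setLIntegral_le_lintegral _ _
  have hk : ENNReal.ofReal ((ρ / t) ^ finrank ℝ E) ≠ 0 := by simpa using by positivity
  rw [setLAverage_eq, setLAverage_eq, addHaar_closedBall_eq_div_pow_mul ht hρ a x,
    ← mul_div_assoc, ENNReal.mul_div_mul_left _ _ hk ofReal_ne_top]
  gcongr

lemma setLIntegral_closedBall_mul_le_lintegral_setLIntegral {s t : ℝ} (hst : s ≤ t)
    {f : E → ℝ≥0∞} (hf : Measurable f) (x : E) :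
    (∫⁻ y in closedBall x t, f y ∂μ) * μ (closedBall 0 s) ≤
      ∫⁻ w in closedBall x (2 * t), ∫⁻ y in closedBall w s, f y ∂μ ∂μ := by
  let K (w y : E) : ℝ≥0∞ := (closedBall w s).indicator f y
  have K_comm (w y : E) : K w y = (closedBall y s).indicator (fun _ ↦ f y) w := by
    simp only [K, Set.indicator, mem_closedBall, dist_comm y w]
  have hK : Measurable (Function.uncurry K) :=
    (hf.comp measurable_snd).indicator (s := {p : E × E | dist p.2 p.1 ≤ s})
      (isClosed_le (by fun_prop) continuous_const).measurableSet
  have inner_eq {y : E} (hy : y ∈ closedBall x t) :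
      ∫⁻ w in closedBall x (2 * t), K w y ∂μ = f y * μ (closedBall 0 s) := by
    have hsub : closedBall y s ⊆ closedBall x (2 * t) :=
      closedBall_subset_closedBall' (by linarith [mem_closedBall.1 hy])
    simp_rw [K_comm]
    rw [setLIntegral_indicator measurableSet_closedBall, inter_eq_left.2 hsub, setLIntegral_const,
      Measure.addHaar_closedBall_center]
  calc (∫⁻ y in closedBall x t, f y ∂μ) * μ (closedBall 0 s)
      = ∫⁻ y in closedBall x t, f y * μ (closedBall 0 s) ∂μ :=
        (lintegral_mul_const _ hf).symm
    _ = ∫⁻ y in closedBall x t, ∫⁻ w in closedBall x (2 * t), K w y ∂μ ∂μ :=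
        setLIntegral_congr_fun measurableSet_closedBall fun y hy ↦ (inner_eq hy).symm
    _ ≤ ∫⁻ y, ∫⁻ w in closedBall x (2 * t), K w y ∂μ ∂μ := setLIntegral_le_lintegral _ _
    _ = ∫⁻ w in closedBall x (2 * t), ∫⁻ y in closedBall w s, f y ∂μ ∂μ := by
        rw [lintegral_lintegral_swap (by exact (hK.comp measurable_swap).aemeasurable)]
        simp only [K, lintegral_indicator measurableSet_closedBall]

lemma setLAverage_closedBall_le_setLAverage_setLAverage {s t : ℝ} (hs : 0 < s) (hst : s ≤ t)
    {f : E → ℝ≥0∞} (hf : Measurable f) (x : E) :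
    ⨍⁻ y in closedBall x t, f y ∂μ ≤ 2 ^ finrank ℝ E *
      ⨍⁻ w in closedBall x (2 * t), ⨍⁻ y in closedBall w s, f y ∂μ ∂μ := by
  have ht := hs.trans_le hst
  have hμs : μ (closedBall 0 s) ≠ 0 := (measure_closedBall_pos μ 0 hs).ne'
  have hdouble : μ (closedBall x (2 * t)) = 2 ^ finrank ℝ E * μ (closedBall x t) := by
    rw [addHaar_closedBall_eq_div_pow_mul ht (by positivity) x x, mul_div_cancel_right₀ _ ht.ne',
      ofReal_pow zero_le_two, ofReal_ofNat]
  have hiter : ⨍⁻ w in closedBall x (2 * t), ⨍⁻ y in closedBall w s, f y ∂μ ∂μ =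
      (∫⁻ w in closedBall x (2 * t), ∫⁻ y in closedBall w s, f y ∂μ ∂μ) /
        (μ (closedBall x (2 * t)) * μ (closedBall 0 s)) := by
    simp_rw [setLAverage_eq, Measure.addHaar_closedBall_center μ _ s, div_eq_mul_inv]
    rw [lintegral_mul_const' _ _ (ENNReal.inv_ne_top.2 hμs), mul_assoc,
      ENNReal.mul_inv (.inr measure_closedBall_lt_top.ne) (.inr hμs), mul_comm (μ _)⁻¹]
  rw [hiter, hdouble, mul_assoc, ← mul_div_assoc, ENNReal.mul_div_mul_left _ _ (by simp) (by simp),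
    setLAverage_eq, ← ENNReal.mul_div_mul_right _ _ hμs measure_closedBall_lt_top.ne]
  gcongr
  exact setLIntegral_closedBall_mul_le_lintegral_setLIntegral hst hf x

end Ball

section LayerCake

variable {α : Type*} [MeasurableSpace α] {ν : Measure α} {F f : α → ℝ≥0∞} {s : ℝ}

lemma lintegral_rpow_eq_lintegral_meas_ofReal_lt_mul_of_ne_top (hF : Measurable F)
    (hF_top : ∀ x, F x ≠ ∞) (hs : 0 < s) :
    ∫⁻ x, F x ^ s ∂ν = ENNReal.ofReal s *
      ∫⁻ t in Ioi 0, ν {x | ENNReal.ofReal t < F x} * ENNReal.ofReal (t ^ (s - 1)) := by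
  have hF_rpow (x : α) : F x ^ s = ENNReal.ofReal ((F x).toReal ^ s) := by
    rw [← ofReal_rpow_of_nonneg toReal_nonneg hs.le, ofReal_toReal (hF_top x)]
  rw [lintegral_congr hF_rpow, lintegral_rpow_eq_lintegral_meas_lt_mul ν
    (.of_forall fun x ↦ toReal_nonneg) hF.ennreal_toReal.aemeasurable hs]
  congr 1
  refine setLIntegral_congr_fun measurableSet_Ioi fun t ht ↦ ?_
  simp only [ofReal_lt_iff_lt_toReal (mem_Ioi.1 ht).le (hF_top _)]

lemma lintegral_rpow_eq_lintegral_meas_ofReal_lt_mul (hF : Measurable F) (hs : 0 < s) :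
    ∫⁻ x, F x ^ s ∂ν = ENNReal.ofReal s *
      ∫⁻ t in Ioi 0, ν {x | ENNReal.ofReal t < F x} * ENNReal.ofReal (t ^ (s - 1)) := by
  let T (k : ℕ) (x : α) : ℝ≥0∞ := min (F x) k
  have hT_mono (x : α) : Monotone (T · x) := fun k l hkl ↦ by dsimp only [T]; gcongr
  have hT_iSup (x : α) : ⨆ k, T k x = F x := by
    change ⨆ k : ℕ, F x ⊓ k = F x
    rw [← inf_iSup_eq, ENNReal.iSup_natCast, inf_top_eq]
  have hT (k : ℕ) : Measurable (T k) := hF.min measurable_const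
  have hpow (x : α) : F x ^ s = ⨆ k, T k x ^ s := by
    rw [← hT_iSup x]; exact (ENNReal.orderIsoRpow s hs).map_iSup _
  have hset (t : ℝ) : ν {x | ENNReal.ofReal t < F x} = ⨆ k, ν {x | ENNReal.ofReal t < T k x} := by
    have hunion : {x | ENNReal.ofReal t < F x} = ⋃ k, {x | ENNReal.ofReal t < T k x} := by
      ext x; simp [← hT_iSup x, lt_iSup_iff]
    rw [hunion]
    exact Monotone.measure_iUnion fun k l hkl x hx ↦ lt_of_lt_of_le hx (hT_mono x hkl)
  simp_rw [hpow, hset, ENNReal.iSup_mul]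
  rw [lintegral_iSup (fun k ↦ (hT k).pow_const s), lintegral_iSup, ENNReal.mul_iSup]
  · congr! 2 with k
    exact lintegral_rpow_eq_lintegral_meas_ofReal_lt_mul_of_ne_top (hT k)
      (fun x ↦ ne_top_of_le_ne_top (natCast_ne_top k) (min_le_right _ _)) hs
  · intro k
    refine .mul ?_ (by fun_prop)
    exact Antitone.measurable fun t t' htt' ↦ measure_mono fun x hx ↦
      lt_of_le_of_lt (ofReal_le_ofReal htt') hx
  · intro k l hkl t
    dsimp only
    gcongr ν ?_ * _
    exact fun x hx ↦ lt_of_lt_of_le hx (hT_mono x hkl)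
  · exact fun k l hkl x ↦ rpow_le_rpow (hT_mono x hkl) hs.le

lemma lintegral_rpow_le_of_mul_meas_lt_le {A : ℝ≥0∞} (hA : A ≠ ∞) (hF : Measurable F)
    (hf : Measurable f) (hs : 1 < s)
    (h : ∀ l, l * ν {x | l < F x} ≤ A * ∫⁻ x in {x | l < 2 * f x}, f x ∂ν) :
    ∫⁻ x, F x ^ s ∂ν ≤
      ENNReal.ofReal (s / (s - 1)) * A * 2 ^ (s - 1) * ∫⁻ x, f x ^ s ∂ν := by
  have hs1 : 0 < s - 1 := by linarith
  have level_le (t : ℝ) (ht : t ∈ Ioi 0) :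
      ν {x | ENNReal.ofReal t < F x} * ENNReal.ofReal (t ^ (s - 1)) ≤
        A * (ν.withDensity f {x | ENNReal.ofReal t < 2 * f x} *
          ENNReal.ofReal (t ^ (s - 1 - 1))) := by
    have ht : 0 < t := ht
    rw [withDensity_apply _ (measurableSet_lt measurable_const (hf.const_mul 2)), ← mul_assoc,
      show t ^ (s - 1) = t * t ^ (s - 1 - 1) by rw [Real.rpow_sub_one ht.ne' (s - 1)]; field_simp,
      ofReal_mul ht.le, ← mul_assoc, mul_comm (ν _)]
    gcongr ?_ * _
    exact h _
  have density_eq (x : α) : f x * (2 * f x) ^ (s - 1) = 2 ^ (s - 1) * f x ^ s := by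
    rw [mul_rpow_of_nonneg _ _ hs1.le, mul_left_comm]
    congr 1
    conv_rhs =>
      rw [← add_sub_cancel 1 s, rpow_add_of_nonneg _ _ zero_le_one hs1.le, ENNReal.rpow_one]
  calc ∫⁻ x, F x ^ s ∂ν
      ≤ ENNReal.ofReal s * ∫⁻ t in Ioi 0, A * (ν.withDensity f {x | ENNReal.ofReal t < 2 * f x} *
          ENNReal.ofReal (t ^ (s - 1 - 1))) := by
        rw [lintegral_rpow_eq_lintegral_meas_ofReal_lt_mul hF (by linarith)]
        gcongr ENNReal.ofReal s * ?_
        exact setLIntegral_mono' measurableSet_Ioi level_le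
    _ = ENNReal.ofReal (s / (s - 1)) * A * ∫⁻ x, (2 * f x) ^ (s - 1) ∂ν.withDensity f := by
        rw [lintegral_const_mul' _ _ hA,
          lintegral_rpow_eq_lintegral_meas_ofReal_lt_mul (hf.const_mul 2) hs1,
          show ENNReal.ofReal s = ENNReal.ofReal (s / (s - 1)) * ENNReal.ofReal (s - 1) by
            rw [← ofReal_mul (by positivity), div_mul_cancel₀ _ hs1.ne']]
        ring
    _ = ENNReal.ofReal (s / (s - 1)) * A * 2 ^ (s - 1) * ∫⁻ x, f x ^ s ∂ν := by
        rw [lintegral_withDensity_eq_lintegral_mul _ hf ((hf.const_mul 2).pow_const _)]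
        simp only [Pi.mul_apply, density_eq]
        rw [lintegral_const_mul _ (hf.pow_const s), mul_assoc _ (2 ^ (s - 1))]

end LayerCake

section Maximal

variable {E : Type*} [NormedAddCommGroup E] [MeasurableSpace E]

/-- The centred Hardy–Littlewood maximal function, with closed balls. -/
def hlMaximal (μ : Measure E) (f : E → ℝ≥0∞) (x : E) : ℝ≥0∞ :=
  ⨆ (R : ℝ) (_ : 0 < R), ⨍⁻ y in closedBall x R, f y ∂μ

variable {μ : Measure E} {f : E → ℝ≥0∞}

lemma setLAverage_closedBall_le_hlMaximal {R : ℝ} (hR : 0 < R) (f : E → ℝ≥0∞) (x : E) :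
    ⨍⁻ y in closedBall x R, f y ∂μ ≤ hlMaximal μ f x :=
  le_iSup₂ (f := fun R (_ : 0 < R) ↦ ⨍⁻ y in closedBall x R, f y ∂μ) R hR

lemma lt_hlMaximal_iff {l : ℝ≥0∞} {x : E} :
    l < hlMaximal μ f x ↔ ∃ R > 0, l < ⨍⁻ y in closedBall x R, f y ∂μ := by
  simp only [hlMaximal, lt_iSup_iff, exists_prop, gt_iff_lt]

lemma hlMaximal_const_mul {c : ℝ≥0∞} (hc : c ≠ ∞) (f : E → ℝ≥0∞) (x : E) :
    hlMaximal μ (fun y ↦ c * f y) x = c * hlMaximal μ f x := by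
  simp only [hlMaximal, setLAverage_const_mul hc, ENNReal.mul_iSup]

variable [NormedSpace ℝ E] [FiniteDimensional ℝ E] [BorelSpace E] [μ.IsAddHaarMeasure]

lemma lowerSemicontinuous_hlMaximal (f : E → ℝ≥0∞) : LowerSemicontinuous (hlMaximal μ f) := by
  intro x l hl
  obtain ⟨R, hR, hlR⟩ := lt_hlMaximal_iff.1 hl
  have le_maximal (y : E) : ENNReal.ofReal (((R + dist x y) / R)⁻¹ ^ finrank ℝ E) *
      ⨍⁻ y in closedBall x R, f y ∂μ ≤ hlMaximal μ f y := by
    have hk : 0 < ((R + dist x y) / R) ^ finrank ℝ E := by positivity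
    rw [inv_pow, ofReal_inv_of_pos hk, ENNReal.inv_mul_le_iff (by simpa using hk) ofReal_ne_top]
    refine (setLAverage_closedBall_le_mul hR (add_comm (dist x y) R).le f).trans ?_
    gcongr
    exact setLAverage_closedBall_le_hlMaximal (by positivity) f y
  have htends : Tendsto (fun y ↦ ENNReal.ofReal (((R + dist x y) / R)⁻¹ ^ finrank ℝ E) *
      ⨍⁻ y in closedBall x R, f y ∂μ) (𝓝 x) (𝓝 (1 * ⨍⁻ y in closedBall x R, f y ∂μ)) := by
    refine ENNReal.Tendsto.mul_const ?_ (.inl one_ne_zero)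
    have hcont : ContinuousAt (fun y ↦ ((R + dist x y) / R)⁻¹ ^ finrank ℝ E) x := by
      refine .pow (.inv₀ (by fun_prop) ?_) _
      simp [hR.ne']
    simpa [Function.comp_def, hR.ne'] using (ENNReal.continuous_ofReal.tendsto _).comp hcont
  rw [one_mul] at htends
  exact (htends.eventually_const_lt hlR).mono fun y hy ↦ hy.trans_le (le_maximal y)

lemma le_hlMaximal_of_lowerSemicontinuous (hf : LowerSemicontinuous f) (x : E) :
    f x ≤ hlMaximal μ f x := by
  refine le_of_forall_lt fun c hc ↦ ?_
  obtain ⟨d, hcd, hdf⟩ := exists_between hc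
  obtain ⟨ε, hε, hball⟩ := Metric.nhds_basis_closedBall.eventually_iff.1 (hf x d hdf)
  exact hcd.trans_le <| (le_setLAverage_closedBall_of_forall_le hε fun y hy ↦ (hball hy).le).trans
    (setLAverage_closedBall_le_hlMaximal hε f x)

lemma mul_measure_le_of_forall_exists_le_setLAverage {S : Set E} {l : ℝ≥0∞} {k : ℝ}
    (hS : ∀ x ∈ S, ∃ R, 0 < R ∧ R ≤ k ∧ l ≤ ⨍⁻ y in closedBall x R, f y ∂μ) :
    l * μ S ≤ 5 ^ finrank ℝ E * ∫⁻ x, f x ∂μ := by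
  choose! R hR_pos hR_le hR using hS
  obtain ⟨U, hUS, hdisj, hcov⟩ := Vitali.exists_disjoint_subfamily_covering_enlargement_closedBall
    S (fun x ↦ x) R k hR_le 5 (by norm_num)
  have hU : U.Countable := hdisj.countable_of_nonempty_interior fun a ha ↦
    ⟨a, ball_subset_interior_closedBall (mem_ball_self (hR_pos a (hUS ha)))⟩
  have hS_sub : S ⊆ ⋃ b ∈ U, closedBall b (5 * R b) := fun a ha ↦
    let ⟨b, hb, hab⟩ := hcov a ha
    mem_biUnion hb (hab (mem_closedBall_self (hR_pos a ha).le))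
  have ball_le (b : E) (hb : b ∈ S) : l * μ (closedBall b (5 * R b)) ≤
      5 ^ finrank ℝ E * ∫⁻ y in closedBall b (R b), f y ∂μ := by
    rw [addHaar_closedBall_eq_div_pow_mul (hR_pos b hb) (by linarith [hR_pos b hb]) b b,
      mul_div_cancel_right₀ _ (hR_pos b hb).ne', ofReal_pow (by norm_num), ofReal_ofNat,
      ← measure_mul_setLAverage f measure_closedBall_lt_top.ne, mul_left_comm, mul_comm l]
    gcongr
    exact hR b hb
  calc l * μ S ≤ l * ∑' b : U, μ (closedBall b.1 (5 * R b.1)) := by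
        gcongr
        exact (measure_mono hS_sub).trans (measure_biUnion_le _ hU _)
    _ ≤ ∑' b : U, 5 ^ finrank ℝ E * ∫⁻ y in closedBall b.1 (R b.1), f y ∂μ := by
        rw [← ENNReal.tsum_mul_left]
        exact ENNReal.tsum_le_tsum fun b ↦ ball_le b (hUS b.2)
    _ = 5 ^ finrank ℝ E * ∫⁻ y in ⋃ b ∈ U, closedBall b (R b), f y ∂μ := by
        rw [ENNReal.tsum_mul_left,
          lintegral_biUnion hU (fun _ _ ↦ measurableSet_closedBall) hdisj]
    _ ≤ 5 ^ finrank ℝ E * ∫⁻ x, f x ∂μ := by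
        gcongr
        exact Measure.restrict_le_self

lemma mul_measure_lt_hlMaximal_le (l : ℝ≥0∞) (f : E → ℝ≥0∞) :
    l * μ {x | l < hlMaximal μ f x} ≤ 5 ^ finrank ℝ E * ∫⁻ x, f x ∂μ := by
  let S (k : ℕ) : Set E := {x | ∃ R : ℝ, 0 < R ∧ R ≤ k ∧ l ≤ ⨍⁻ y in closedBall x R, f y ∂μ}
  have hS_mono : Monotone S := fun k m hkm x ⟨R, hR, hRk, hl⟩ ↦
    ⟨R, hR, hRk.trans (Nat.cast_le.2 hkm), hl⟩
  have hsub : {x | l < hlMaximal μ f x} ⊆ ⋃ k, S k := fun x hx ↦ by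
    obtain ⟨R, hR, hlR⟩ := lt_hlMaximal_iff.1 hx
    exact mem_iUnion.2 ⟨⌈R⌉₊, R, hR, Nat.le_ceil R, hlR.le⟩
  calc l * μ {x | l < hlMaximal μ f x} ≤ l * ⨆ k, μ (S k) := by
        gcongr
        exact (measure_mono hsub).trans hS_mono.measure_iUnion.le
    _ ≤ 5 ^ finrank ℝ E * ∫⁻ x, f x ∂μ := by
        rw [ENNReal.mul_iSup]
        exact iSup_le fun k ↦ mul_measure_le_of_forall_exists_le_setLAverage (k := k) fun x hx ↦ hx

lemma mul_measure_lt_hlMaximal_le_setLIntegral (hf : Measurable f) (l : ℝ≥0∞) :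
    l * μ {x | l < hlMaximal μ f x} ≤
      2 * 5 ^ finrank ℝ E * ∫⁻ x in {x | l < 2 * f x}, f x ∂μ := by
  have hset : MeasurableSet {x | l < 2 * f x} :=
    measurableSet_lt measurable_const (hf.const_mul 2)
  let g := {x | l < 2 * f x}.indicator f
  have f_le (x : E) : f x ≤ g x + l / 2 := by
    by_cases hx : l < 2 * f x
    · simp [g, hx]
    · refine le_add_left ?_
      rw [ENNReal.le_div_iff_mul_le (.inl two_ne_zero) (.inl ofNat_ne_top), mul_comm]
      exact not_lt.1 hx
  have hsub : {x | l < hlMaximal μ f x} ⊆ {x | l / 2 < hlMaximal μ g x} := by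
    intro x hx
    by_contra hg
    refine not_le_of_gt (show l < hlMaximal μ f x from hx) (iSup₂_le fun R hR ↦ ?_)
    calc ⨍⁻ y in closedBall x R, f y ∂μ ≤ ⨍⁻ y in closedBall x R, (g y + l / 2) ∂μ :=
          setLAverage_mono_on measurableSet_closedBall fun y _ ↦ f_le y
      _ = ⨍⁻ y in closedBall x R, g y ∂μ + l / 2 :=
          setLAverage_add_const (measure_closedBall_pos μ x hR).ne' measure_closedBall_lt_top.ne ..
      _ ≤ l / 2 + l / 2 := by
          gcongr
          exact (setLAverage_closedBall_le_hlMaximal hR g x).trans (not_lt.1 hg)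
      _ = l := ENNReal.add_halves l
  calc l * μ {x | l < hlMaximal μ f x} ≤ 2 * (l / 2 * μ {x | l / 2 < hlMaximal μ g x}) := by
        rw [← mul_assoc, ENNReal.mul_div_cancel two_ne_zero ofNat_ne_top]
        gcongr
    _ ≤ 2 * (5 ^ finrank ℝ E * ∫⁻ x, g x ∂μ) := by
        gcongr 2 * ?_
        exact mul_measure_lt_hlMaximal_le _ g
    _ = 2 * 5 ^ finrank ℝ E * ∫⁻ x in {x | l < 2 * f x}, f x ∂μ := by
        rw [lintegral_indicator hset, mul_assoc]

lemma exists_lintegral_hlMaximal_rpow_le {s : ℝ} (hs : 1 < s) :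
    ∃ C : ℝ≥0, ∀ f : E → ℝ≥0∞, Measurable f →
      ∫⁻ x, hlMaximal μ f x ^ s ∂μ ≤ C * ∫⁻ x, f x ^ s ∂μ := by
  have hA : (2 * 5 ^ finrank ℝ E : ℝ≥0∞) ≠ ∞ := by finiteness
  obtain ⟨C, hC⟩ : ∃ C : ℝ≥0,
      C = ENNReal.ofReal (s / (s - 1)) * (2 * 5 ^ finrank ℝ E) * 2 ^ (s - 1) :=
    ⟨_, coe_toNNReal (by finiteness)⟩
  refine ⟨C, fun f hf ↦ hC ▸ ?_⟩
  exact lintegral_rpow_le_of_mul_meas_lt_le hA (lowerSemicontinuous_hlMaximal f).measurable hf hs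
    (mul_measure_lt_hlMaximal_le_setLIntegral hf)

end Maximal

section PowMaximal

variable {E : Type*} [NormedAddCommGroup E] [MeasurableSpace E]

/-- The maximal function `M_σ f = (M (f ^ σ)) ^ (1 / σ)`, where `M` is the Hardy–Littlewood maximal
function. It is bounded on `L^p` for all `p > σ`, in particular for exponents `p ≤ 1`. -/
def powMaximal (μ : Measure E) (σ : ℝ) (f : E → ℝ≥0∞) (x : E) : ℝ≥0∞ :=
  hlMaximal μ (fun y ↦ f y ^ σ) x ^ σ⁻¹

variable {μ : Measure E} {σ : ℝ} {f : E → ℝ≥0∞}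

lemma powMaximal_const_mul (hσ : 0 < σ) {c : ℝ≥0∞} (hc : c ≠ ∞) (f : E → ℝ≥0∞) (x : E) :
    powMaximal μ σ (fun y ↦ c * f y) x = c * powMaximal μ σ f x := by
  simp only [powMaximal, mul_rpow_of_nonneg _ _ hσ.le,
    hlMaximal_const_mul (rpow_ne_top_of_nonneg hσ.le hc),
    mul_rpow_of_nonneg _ _ (inv_nonneg.2 hσ.le), ENNReal.rpow_rpow_inv hσ.ne']

lemma powMaximal_rpow (hσ : σ ≠ 0) (f : E → ℝ≥0∞) (x : E) :
    powMaximal μ σ f x ^ σ = hlMaximal μ (fun y ↦ f y ^ σ) x :=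
  ENNReal.rpow_inv_rpow hσ _

lemma setLAverage_rpow_le_powMaximal_rpow (hσ : σ ≠ 0) {R : ℝ} (hR : 0 < R) (f : E → ℝ≥0∞) (x : E) :
    ⨍⁻ y in closedBall x R, f y ^ σ ∂μ ≤ powMaximal μ σ f x ^ σ :=
  powMaximal_rpow (μ := μ) hσ f x ▸ setLAverage_closedBall_le_hlMaximal hR _ x

variable [NormedSpace ℝ E] [FiniteDimensional ℝ E] [BorelSpace E] [μ.IsAddHaarMeasure]

lemma measurable_powMaximal (f : E → ℝ≥0∞) : Measurable (powMaximal μ σ f) :=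
  (lowerSemicontinuous_hlMaximal _).measurable.pow_const _

lemma le_powMaximal_of_lowerSemicontinuous (hσ : 0 < σ) (hf : LowerSemicontinuous f) (x : E) :
    f x ≤ powMaximal μ σ f x := by
  have hf_rpow : LowerSemicontinuous fun y ↦ f y ^ σ :=
    ENNReal.continuous_rpow_const.comp_lowerSemicontinuous hf
      (ENNReal.monotone_rpow_of_nonneg hσ.le)
  rw [← ENNReal.rpow_le_rpow_iff hσ, powMaximal_rpow hσ.ne']
  exact le_hlMaximal_of_lowerSemicontinuous hf_rpow x

lemma le_mul_powMaximal_of_forall_le (hσ : 0 < σ) {s R : ℝ} {x w : E} (hs : 0 < s)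
    (hR : dist w x + s ≤ R) {a : ℝ≥0∞} (ha : ∀ y ∈ closedBall w s, a ≤ f y) :
    a ≤ ENNReal.ofReal ((R / s) ^ (finrank ℝ E / σ)) * powMaximal μ σ f x := by
  have hR_pos : 0 < R := by linarith [dist_nonneg (x := w) (y := x)]
  rw [← ENNReal.rpow_le_rpow_iff hσ, mul_rpow_of_nonneg _ _ hσ.le,
    ofReal_rpow_of_pos (by positivity), ← Real.rpow_mul (by positivity), div_mul_cancel₀ _ hσ.ne',
    Real.rpow_natCast]
  calc a ^ σ ≤ ⨍⁻ y in closedBall w s, f y ^ σ ∂μ :=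
        le_setLAverage_closedBall_of_forall_le hs fun y hy ↦ by gcongr; exact ha y hy
    _ ≤ ENNReal.ofReal ((R / s) ^ finrank ℝ E) * ⨍⁻ y in closedBall x R, f y ^ σ ∂μ :=
        setLAverage_closedBall_le_mul hs hR _
    _ ≤ _ := by
        gcongr
        exact setLAverage_rpow_le_powMaximal_rpow hσ.ne' hR_pos f x

lemma exists_lintegral_powMaximal_rpow_le (μ : Measure E) [μ.IsAddHaarMeasure] {p : ℝ}
    (hσ : 0 < σ) (hσp : σ < p) :
    ∃ C : ℝ≥0, ∀ f : E → ℝ≥0∞, Measurable f →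
      ∫⁻ x, powMaximal μ σ f x ^ p ∂μ ≤ C * ∫⁻ x, f x ^ p ∂μ := by
  obtain ⟨C, hC⟩ := exists_lintegral_hlMaximal_rpow_le (μ := μ) ((one_lt_div hσ).2 hσp)
  refine ⟨C, fun f hf ↦ ?_⟩
  simpa only [powMaximal, ← ENNReal.rpow_mul, inv_mul_eq_div, mul_div_cancel₀ _ hσ.ne']
    using hC _ (hf.pow_const σ)

lemma le_mul_powMaximal_rpow_mul_rpow_of_forall_le (hσ : 0 < σ) (hσ1 : σ ≤ 1) {s R : ℝ} {x w : E}
    (hs : 0 < s) (hR : dist w x + s ≤ R) {a : ℝ≥0∞} (ha : ∀ y ∈ closedBall w s, a ≤ f y) :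
    a ≤ ENNReal.ofReal ((R / s) ^ (finrank ℝ E / σ * (1 - σ))) *
      powMaximal μ σ f x ^ (1 - σ) * f w ^ σ := by
  have hR_pos : 0 < R := by linarith [dist_nonneg (x := w) (y := x)]
  have hσ1' : 0 ≤ 1 - σ := by linarith
  calc a = a ^ (1 - σ) * a ^ σ := by
        rw [← rpow_add_of_nonneg _ _ hσ1' hσ.le, sub_add_cancel, ENNReal.rpow_one]
    _ ≤ (ENNReal.ofReal ((R / s) ^ (finrank ℝ E / σ)) * powMaximal μ σ f x) ^ (1 - σ) *
          f w ^ σ := by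
        gcongr
        · exact le_mul_powMaximal_of_forall_le hσ hs hR ha
        · exact ha w (mem_closedBall_self hs.le)
    _ = ENNReal.ofReal ((R / s) ^ (finrank ℝ E / σ * (1 - σ))) *
          powMaximal μ σ f x ^ (1 - σ) * f w ^ σ := by
        rw [mul_rpow_of_nonneg _ _ hσ1', ofReal_rpow_of_pos (by positivity),
          ← Real.rpow_mul (by positivity)]

lemma setLAverage_le_mul_powMaximal (hσ : 0 < σ) (hσ1 : σ ≤ 1) {ε t : ℝ} (hε : 0 < ε) (hε1 : ε ≤ 1)
    (ht : 0 < t) {h g : E → ℝ≥0∞} (hh : Measurable h)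
    (hg : ∀ w, ∀ y ∈ closedBall w (ε * t), ⨍⁻ z in closedBall w (ε * t), h z ∂μ ≤ g y) (x : E) :
    ⨍⁻ y in closedBall x t, h y ∂μ ≤
      2 ^ finrank ℝ E * ENNReal.ofReal ((3 / ε) ^ (finrank ℝ E / σ * (1 - σ))) *
        powMaximal μ σ g x := by
  have hs : 0 < ε * t := by positivity
  have hst : ε * t ≤ t := mul_le_of_le_one_left ht.le hε1
  set K := ENNReal.ofReal ((3 / ε) ^ (finrank ℝ E / σ * (1 - σ))) with hK_def
  set M := powMaximal μ σ g x
  have average_le (w : E) (hw : w ∈ closedBall x (2 * t)) :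
      ⨍⁻ z in closedBall w (ε * t), h z ∂μ ≤ K * M ^ (1 - σ) * g w ^ σ := by
    rw [hK_def, ← mul_div_mul_right 3 ε ht.ne']
    exact le_mul_powMaximal_rpow_mul_rpow_of_forall_le hσ hσ1 hs
      (by linarith [mem_closedBall.1 hw]) (hg w)
  by_cases hM : M = ∞
  · have hK : K ≠ 0 := by simpa [K] using by positivity
    rw [hM, mul_top (by simp [hK])]
    exact le_top
  have hKM : K * M ^ (1 - σ) ≠ ∞ :=
    mul_ne_top ofReal_ne_top (rpow_ne_top_of_nonneg (by linarith) hM)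
  calc ⨍⁻ y in closedBall x t, h y ∂μ
      ≤ 2 ^ finrank ℝ E *
          ⨍⁻ w in closedBall x (2 * t), ⨍⁻ y in closedBall w (ε * t), h y ∂μ ∂μ :=
        setLAverage_closedBall_le_setLAverage_setLAverage hs hst hh x
    _ ≤ 2 ^ finrank ℝ E * (K * M ^ (1 - σ) * ⨍⁻ w in closedBall x (2 * t), g w ^ σ ∂μ) := by
        rw [← setLAverage_const_mul hKM]
        gcongr _ * ?_
        exact setLAverage_mono_on measurableSet_closedBall average_le
    _ ≤ 2 ^ finrank ℝ E * (K * M ^ (1 - σ) * M ^ σ) := by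
        gcongr
        exact setLAverage_rpow_le_powMaximal_rpow hσ.ne' (by positivity) g x
    _ = 2 ^ finrank ℝ E * K * M := by
        rw [mul_assoc K, ← rpow_add_of_nonneg _ _ (by linarith) hσ.le, sub_add_cancel,
          ENNReal.rpow_one, mul_assoc]

lemma exists_lintegral_rpow_le_of_forall_le_powMaximal (μ : Measure E) [μ.IsAddHaarMeasure]
    {p : ℝ} (hσ : 0 < σ) (hσp : σ < p) (hp : p ≤ 1) : ∃ η : ℝ≥0∞, η ≠ 0 ∧ ∀ B : ℝ≥0, ∃ C : ℝ≥0,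
      ∀ f g : E → ℝ≥0∞, Measurable f → Measurable g → ∫⁻ x, f x ^ p ∂μ ≠ ∞ →
        (∀ x, f x ≤ η * powMaximal μ σ f x + B * powMaximal μ σ g x) →
          ∫⁻ x, f x ^ p ∂μ ≤ C * ∫⁻ x, g x ^ p ∂μ := by
  have hp0 : 0 < p := hσ.trans hσp
  obtain ⟨Q, hQ⟩ := exists_lintegral_powMaximal_rpow_le μ hσ hσp
  obtain ⟨δ, hδ, hδQ⟩ : ∃ δ : ℝ≥0∞, δ ≠ 0 ∧ δ * Q ≤ 2⁻¹ := by
    refine ⟨((2 * (Q + 1))⁻¹ : ℝ≥0), coe_ne_zero.2 (by positivity), ?_⟩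
    rw [← coe_ofNat, ← coe_inv two_ne_zero, ← coe_mul, ENNReal.coe_le_coe, mul_inv, mul_assoc]
    exact mul_le_of_le_one_right' (inv_mul_le_one_of_le₀ le_self_add zero_le)
  refine ⟨δ ^ p⁻¹, by simp [hδ, hp0.le], fun B ↦ ⟨2 * (B ^ p * Q), ?_⟩⟩
  intro f g hf hg hfin hle
  have habsorb : ∫⁻ x, f x ^ p ∂μ ≤
      (∫⁻ x, f x ^ p ∂μ) / 2 + B ^ p * (Q * ∫⁻ x, g x ^ p ∂μ) :=
    calc ∫⁻ x, f x ^ p ∂μ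
        ≤ ∫⁻ x, (δ * powMaximal μ σ f x ^ p + B ^ p * powMaximal μ σ g x ^ p) ∂μ := by
          refine lintegral_mono fun x ↦ (ENNReal.rpow_le_rpow (hle x) hp0.le).trans ?_
          refine (ENNReal.rpow_add_le_add_rpow _ _ hp0.le hp).trans_eq ?_
          rw [ENNReal.mul_rpow_of_nonneg _ _ hp0.le, ENNReal.mul_rpow_of_nonneg _ _ hp0.le,
            ENNReal.rpow_inv_rpow hp0.ne']
      _ = δ * (∫⁻ x, powMaximal μ σ f x ^ p ∂μ) + B ^ p * ∫⁻ x, powMaximal μ σ g x ^ p ∂μ := by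
          rw [lintegral_add_left (((measurable_powMaximal f).pow_const p).const_mul _),
            lintegral_const_mul _ ((measurable_powMaximal f).pow_const p),
            lintegral_const_mul _ ((measurable_powMaximal g).pow_const p)]
      _ ≤ δ * (Q * ∫⁻ x, f x ^ p ∂μ) + B ^ p * (Q * ∫⁻ x, g x ^ p ∂μ) := by
          gcongr
          exacts [hQ f hf, hQ g hg]
      _ ≤ _ := by
          rw [← mul_assoc, ENNReal.div_eq_inv_mul]
          gcongr
  rw [← tsub_le_iff_left, ENNReal.sub_half hfin,
    ENNReal.div_le_iff_le_mul (by simp) (by simp)] at habsorb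
  refine habsorb.trans_eq ?_
  rw [coe_mul, coe_mul, coe_rpow_of_nonneg _ hp0.le, coe_ofNat]
  ring

end PowMaximal

section CalderonMaximal

variable {E F : Type*} [NormedAddCommGroup E] [MeasurableSpace E] [NormedAddCommGroup F]

/-- Calderón's sharp maximal function `sup_{t>0} t⁻¹ ⨍_{B(x,t)} |u(y) - u(x)| dy`, which plays the
role of the modulus of the gradient. -/
def calderonMaximal (μ : Measure E) (u : E → F) (x : E) : ℝ≥0∞ :=
  ⨆ (t : ℝ) (_ : 0 < t), ENNReal.ofReal t⁻¹ * ⨍⁻ y in closedBall x t, ‖u y - u x‖ₑ ∂μ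

variable {μ : Measure E} {u : E → F}

lemma calderonMaximal_le_iff {x : E} {c : ℝ≥0∞} :
    calderonMaximal μ u x ≤ c ↔
      ∀ t > 0, ⨍⁻ y in closedBall x t, ‖u y - u x‖ₑ ∂μ ≤ ENNReal.ofReal t * c :=
  iSup₂_le_iff.trans <| forall₂_congr fun t ht ↦ by
    rw [ofReal_inv_of_pos ht, ENNReal.inv_mul_le_iff (by simpa using ht) ofReal_ne_top]

lemma setLAverage_enorm_sub_le_mul_calderonMaximal {t : ℝ} (ht : 0 < t) (u : E → F) (x : E) :
    ⨍⁻ y in closedBall x t, ‖u y - u x‖ₑ ∂μ ≤ ENNReal.ofReal t * calderonMaximal μ u x :=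
  calderonMaximal_le_iff.1 le_rfl t ht

variable [BorelSpace E] [μ.IsAddHaarMeasure]

lemma lowerSemicontinuous_calderonMaximal (hu : Continuous u) :
    LowerSemicontinuous (calderonMaximal μ u) := by
  refine lowerSemicontinuous_biSup fun t _ ↦ lowerSemicontinuous_iff_le_liminf.2 fun x ↦ ?_
  have hcont (z : E) : Continuous fun y ↦ ENNReal.ofReal t⁻¹ * ‖u (y + z) - u y‖ₑ :=
    ENNReal.continuous_const_mul ofReal_ne_top |>.comp (by fun_prop)
  have hav (y : E) : ENNReal.ofReal t⁻¹ * ⨍⁻ z in closedBall y t, ‖u z - u y‖ₑ ∂μ =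
      ∫⁻ z, ENNReal.ofReal t⁻¹ * ‖u (y + z) - u y‖ₑ ∂(μ (closedBall 0 t))⁻¹ •
        μ.restrict (closedBall 0 t) := by
    rw [← setLAverage_const_mul ofReal_ne_top, setLAverage_closedBall_eq_setLAverage_zero,
      setLAverage_eq']
  simp_rw [hav]
  refine le_of_eq_of_le (lintegral_congr fun z ↦ ?_) (lintegral_liminf_le fun y ↦ ?_)
  · exact ((hcont z).tendsto x).liminf_eq.symm
  · have hmeas : Continuous fun z ↦ ‖u (y + z) - u y‖ₑ := by fun_prop
    exact hmeas.measurable.const_mul _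

variable [NormedSpace ℝ E] [FiniteDimensional ℝ E]

lemma setLAverage_enorm_sub_le_mul_calderonMaximal_of_dist_add_le {s R : ℝ} {w z : E} (hs : 0 < s)
    (hR : dist w z + s ≤ R) (u : E → F) :
    ⨍⁻ y in closedBall w s, ‖u y - u z‖ₑ ∂μ ≤
      ENNReal.ofReal ((R / s) ^ finrank ℝ E * R) * calderonMaximal μ u z := by
  have hR_pos : 0 < R := by linarith [dist_nonneg (x := w) (y := z)]
  rw [ofReal_mul (by positivity), mul_assoc]
  refine (setLAverage_closedBall_le_mul hs hR _).trans ?_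
  gcongr
  exact setLAverage_enorm_sub_le_mul_calderonMaximal hR_pos u z

lemma calderonMaximal_le_of_lipschitzWith {L : ℝ≥0} (hu : LipschitzWith L u) (x : E) :
    calderonMaximal μ u x ≤ L := by
  refine calderonMaximal_le_iff.2 fun t ht ↦ setLAverage_closedBall_le_of_forall_le ht fun y hy ↦ ?_
  rw [← edist_eq_enorm_sub, mul_comm]
  refine (hu y x).trans ?_
  gcongr
  exact edist_le_ofReal ht.le |>.2 hy

lemma enorm_sub_le_mul_edist_mul_add_calderonMaximal (hu : Continuous u) (x y : E) :
    ‖u x - u y‖ₑ ≤ 2 ^ (finrank ℝ E + 1) * edist x y *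
      (calderonMaximal μ u x + calderonMaximal μ u y) := by
  rcases eq_or_ne x y with rfl | hxy
  · simp
  set r := dist x y
  have hr_pos : 0 < r := dist_pos.2 hxy
  have hpow : (1 : ℝ≥0∞) ≤ 2 ^ (finrank ℝ E + 1) := one_le_pow₀ one_le_two
  have near_x : ⨍⁻ z in closedBall x r, ‖u z - u x‖ₑ ∂μ ≤
      2 ^ (finrank ℝ E + 1) * edist x y * calderonMaximal μ u x := by
    refine (setLAverage_enorm_sub_le_mul_calderonMaximal hr_pos u x).trans ?_
    rw [edist_dist x y]
    exact mul_le_mul_left (le_mul_of_one_le_left zero_le hpow) _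
  have near_y : ⨍⁻ z in closedBall x r, ‖u z - u y‖ₑ ∂μ ≤
      2 ^ (finrank ℝ E + 1) * edist x y * calderonMaximal μ u y := by
    refine (setLAverage_enorm_sub_le_mul_calderonMaximal_of_dist_add_le hr_pos
      (two_mul (dist x y)).ge u).trans_eq ?_
    rw [mul_div_cancel_right₀ _ hr_pos.ne', ← mul_assoc, ← pow_succ, ofReal_mul (by positivity),
      ofReal_pow zero_le_two, ofReal_ofNat, ← edist_dist]
  calc ‖u x - u y‖ₑ
      = ⨍⁻ _ in closedBall x r, ‖u x - u y‖ₑ ∂μ := (setLAverage_closedBall_const hr_pos x _).symm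
    _ ≤ ⨍⁻ z in closedBall x r, (‖u z - u x‖ₑ + ‖u z - u y‖ₑ) ∂μ := by
        refine setLAverage_mono_on measurableSet_closedBall fun z _ ↦ ?_
        simpa only [edist_eq_enorm_sub] using edist_triangle_left (u x) (u y) (u z)
    _ = ⨍⁻ z in closedBall x r, ‖u z - u x‖ₑ ∂μ + ⨍⁻ z in closedBall x r, ‖u z - u y‖ₑ ∂μ :=
        setLAverage_add (by fun_prop : Continuous fun z ↦ ‖u z - u x‖ₑ).measurable _
    _ ≤ _ := by
        rw [mul_add]
        exact add_le_add near_x near_y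

lemma calderonMaximal_le_of_eqOn_zero {a x : E} {ρ : ℝ} (hρ : 0 < ρ)
    (hu : ∀ y ∉ closedBall a ρ, u y = 0) (hx : x ∉ closedBall a (2 * ρ)) :
    calderonMaximal μ u x ≤ ENNReal.ofReal ((3 / (1 + ‖ρ⁻¹ • (x - a)‖)) ^ (finrank ℝ E + 1)) *
      (ENNReal.ofReal ρ⁻¹ * ⨍⁻ y in closedBall a ρ, ‖u y‖ₑ ∂μ) := by
  have hD : 2 * ρ < dist x a := by simpa using hx
  have hux : u x = 0 := hu x (by simpa using by linarith)
  refine calderonMaximal_le_iff.2 fun t ht ↦ ?_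
  simp only [hux, sub_zero]
  rcases lt_or_ge t (dist x a - ρ) with htD | htD
  · have hvanish (y : E) (hy : y ∈ closedBall x t) : ‖u y‖ₑ ≤ 0 := by
      rw [hu y, enorm_zero]
      intro hya
      linarith [mem_closedBall.1 hya, mem_closedBall'.1 hy, dist_triangle x y a]
    simp [le_zero_iff.1 (setLAverage_closedBall_le_of_forall_le (μ := μ) ht hvanish)]
  · have hsupp (y : E) (hy : y ∉ closedBall a ρ) : ‖u y‖ₑ = 0 := by simp [hu y hy]
    have hratio : ρ / t ≤ 3 / (1 + ‖ρ⁻¹ • (x - a)‖) := by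
      rw [norm_smul, norm_inv, Real.norm_of_nonneg hρ.le, ← dist_eq_norm,
        div_le_div_iff₀ ht (by positivity)]
      field_simp
      linarith
    calc ⨍⁻ y in closedBall x t, ‖u y‖ₑ ∂μ
        ≤ ENNReal.ofReal ((ρ / t) ^ finrank ℝ E) * ⨍⁻ y in closedBall a ρ, ‖u y‖ₑ ∂μ :=
          setLAverage_closedBall_le_mul_of_eqOn_zero hρ ht hsupp x
      _ = ENNReal.ofReal t * (ENNReal.ofReal ((ρ / t) ^ (finrank ℝ E + 1)) *
            (ENNReal.ofReal ρ⁻¹ * ⨍⁻ y in closedBall a ρ, ‖u y‖ₑ ∂μ)) := by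
          rw [← mul_assoc, ← mul_assoc, ← ofReal_mul ht.le, ← ofReal_mul (by positivity),
            show t * (ρ / t) ^ (finrank ℝ E + 1) * ρ⁻¹ = (ρ / t) ^ finrank ℝ E by
              rw [pow_succ]
              field_simp]
      _ ≤ _ := by gcongr

lemma lintegral_comp_inv_smul_sub {f : E → ℝ≥0∞} (hf : Measurable f) (a : E) {r : ℝ}
    (hr : 0 < r) :
    ∫⁻ x, f (r⁻¹ • (x - a)) ∂μ = ENNReal.ofReal (r ^ finrank ℝ E) * ∫⁻ x, f x ∂μ := by
  rw [lintegral_sub_right_eq_self (fun x ↦ f (r⁻¹ • x)) a,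
    ← lintegral_map hf (measurable_const_smul r⁻¹),
    Measure.map_addHaar_smul μ (inv_ne_zero hr.ne'), lintegral_smul_measure, inv_pow, inv_inv,
    abs_of_pos (by positivity), smul_eq_mul]

lemma exists_setLIntegral_compl_calderonMaximal_rpow_le (F : Type*) [NormedAddCommGroup F]
    (μ : Measure E) [μ.IsAddHaarMeasure] {p : ℝ}
    (hp : (finrank ℝ E : ℝ) / (finrank ℝ E + 1) < p) :
    ∃ C : ℝ≥0, ∀ (u : E → F) (a : E) (ρ : ℝ), 0 < ρ → (∀ y ∉ closedBall a ρ, u y = 0) →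
      ∫⁻ x in (closedBall a (2 * ρ))ᶜ, calderonMaximal μ u x ^ p ∂μ ≤
        C * ENNReal.ofReal (ρ ^ finrank ℝ E) *
          (ENNReal.ofReal ρ⁻¹ * ⨍⁻ y in closedBall a ρ, ‖u y‖ₑ ∂μ) ^ p := by
  have hp_pos : 0 < p := lt_of_le_of_lt (by positivity) hp
  set d := finrank ℝ E
  let κ (z : E) : ℝ≥0∞ := ENNReal.ofReal ((3 / (1 + ‖z‖)) ^ (d + 1)) ^ p
  have hκ : ∫⁻ z, κ z ∂μ ≠ ∞ := by
    have hdp : (d : ℝ) < (d + 1) * p := by rwa [div_lt_iff₀' (by positivity)] at hp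
    have hκ_eq (z : E) : κ z = ENNReal.ofReal (3 ^ ((d + 1) * p)) *
        ENNReal.ofReal ((1 + ‖z‖) ^ (-((d + 1) * p))) := by
      simp only [κ]
      rw [← ofReal_mul (by positivity), ofReal_rpow_of_nonneg (by positivity) hp_pos.le,
        ← Real.rpow_natCast, ← Real.rpow_mul (by positivity), Real.rpow_neg (by positivity),
        ← div_eq_mul_inv, Real.div_rpow (by positivity) (by positivity), Nat.cast_add_one]
    rw [lintegral_congr hκ_eq, lintegral_const_mul' _ _ ofReal_ne_top]
    exact ENNReal.mul_ne_top ofReal_ne_top (finite_integral_one_add_norm hdp).ne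
  obtain ⟨C, hC⟩ : ∃ C : ℝ≥0, C = ∫⁻ z, κ z ∂μ := ⟨_, coe_toNNReal hκ⟩
  refine ⟨C, fun u a ρ hρ hu ↦ ?_⟩
  set A := ENNReal.ofReal ρ⁻¹ * ⨍⁻ y in closedBall a ρ, ‖u y‖ₑ ∂μ
  calc ∫⁻ x in (closedBall a (2 * ρ))ᶜ, calderonMaximal μ u x ^ p ∂μ
      ≤ ∫⁻ x in (closedBall a (2 * ρ))ᶜ, κ (ρ⁻¹ • (x - a)) * A ^ p ∂μ := by
        refine setLIntegral_mono' measurableSet_closedBall.compl fun x hx ↦ ?_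
        rw [← ENNReal.mul_rpow_of_nonneg _ _ hp_pos.le]
        exact ENNReal.rpow_le_rpow (calderonMaximal_le_of_eqOn_zero hρ hu hx) hp_pos.le
    _ ≤ ∫⁻ x, κ (ρ⁻¹ • (x - a)) * A ^ p ∂μ := setLIntegral_le_lintegral _ _
    _ = C * ENNReal.ofReal (ρ ^ d) * A ^ p := by
        rw [lintegral_mul_const _ (by fun_prop), lintegral_comp_inv_smul_sub (by fun_prop) a hρ, hC,
          mul_comm (ENNReal.ofReal _)]

lemma lintegral_calderonMaximal_rpow_ne_top {L : ℝ≥0} (hu : LipschitzWith L u)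
    (hu' : HasCompactSupport u) {p : ℝ} (hp : (finrank ℝ E : ℝ) / (finrank ℝ E + 1) < p) :
    ∫⁻ x, calderonMaximal μ u x ^ p ∂μ ≠ ∞ := by
  have hp_pos : 0 < p := lt_of_le_of_lt (by positivity) hp
  obtain ⟨ρ, hρ, hsupp⟩ := hu'.isBounded.subset_closedBall_lt 0 0
  have hu0 (y : E) (hy : y ∉ closedBall 0 ρ) : u y = 0 :=
    image_eq_zero_of_notMem_tsupport (hy ∘ @hsupp y)
  obtain ⟨M, hM⟩ := hu'.exists_bound_of_continuous hu.continuous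
  obtain ⟨C, hC⟩ := exists_setLIntegral_compl_calderonMaximal_rpow_le F μ hp
  have near : ∫⁻ x in closedBall 0 (2 * ρ), calderonMaximal μ u x ^ p ∂μ ≤
      L ^ p * μ (closedBall 0 (2 * ρ)) := by
    rw [← setLIntegral_const]
    gcongr with x
    exact calderonMaximal_le_of_lipschitzWith hu x
  have average_le : ⨍⁻ y in closedBall 0 ρ, ‖u y‖ₑ ∂μ ≤ ENNReal.ofReal M :=
    setLAverage_closedBall_le_of_forall_le hρ fun y _ ↦ by
      rw [← ofReal_norm]
      exact ofReal_le_ofReal (hM y)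
  have far := (hC u 0 ρ hρ hu0).trans_lt <| ENNReal.mul_lt_top
    (ENNReal.mul_lt_top coe_lt_top ofReal_lt_top) <| ENNReal.rpow_lt_top_of_nonneg hp_pos.le
    (ENNReal.mul_ne_top ofReal_ne_top (average_le.trans_lt ofReal_lt_top).ne)
  rw [← lintegral_add_compl _ measurableSet_closedBall]
  refine ENNReal.add_ne_top.2 ⟨(near.trans_lt ?_).ne, far.ne⟩
  exact ENNReal.mul_lt_top (ENNReal.rpow_lt_top_of_nonneg hp_pos.le coe_ne_top)
    measure_closedBall_lt_top

end CalderonMaximal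

section Mollify

variable {E : Type*} [NormedAddCommGroup E] [NormedSpace ℝ E]

lemma comp_inv_smul_sub_eq_zero {g : E → ℝ} (hg : tsupport g ⊆ ball 0 1) {t : ℝ} (ht : 0 < t)
    {x y : E} (hy : y ∉ closedBall x t) : g (t⁻¹ • (x - y)) = 0 := by
  refine image_eq_zero_of_notMem_tsupport fun hmem ↦ hy ?_
  have hlt := hg hmem
  rw [mem_ball_zero_iff, norm_smul, norm_inv, Real.norm_of_nonneg ht.le, inv_mul_lt_iff₀ ht,
    mul_one, ← dist_eq_norm] at hlt
  exact mem_closedBall'.2 hlt.le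

lemma fderiv_comp_inv_smul_sub_apply {ψ : E → ℝ} (hψ : Differentiable ℝ ψ) (t : ℝ)
    (x y v : E) :
    fderiv ℝ (fun y ↦ ψ (t⁻¹ • (x - y))) y v = -(t⁻¹ * fderiv ℝ ψ (t⁻¹ • (x - y)) v) := by
  have hinner : HasFDerivAt (fun y ↦ t⁻¹ • (x - y)) (t⁻¹ • -ContinuousLinearMap.id ℝ E) y :=
    ((hasFDerivAt_id y).const_sub x).const_smul t⁻¹
  have hcomp : HasFDerivAt (fun y ↦ ψ (t⁻¹ • (x - y))) _ y := (hψ _).hasFDerivAt.comp y hinner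
  simp [hcomp.fderiv]

variable [MeasurableSpace E]

/-- The convolution `f * ψ_t`, where `ψ_t(y) = t^{-d} ψ(y / t)` and `d` is the dimension. -/
def mollify (μ : Measure E) (ψ f : E → ℝ) (t : ℝ) (x : E) : ℝ :=
  ∫ y, f y * (t⁻¹ ^ finrank ℝ E * ψ (t⁻¹ • (x - y))) ∂μ

lemma mollify_eq_mul_integral (μ : Measure E) (ψ f : E → ℝ) (t : ℝ) (x : E) :
    mollify μ ψ f t x = t⁻¹ ^ finrank ℝ E * ∫ y, f y * ψ (t⁻¹ • (x - y)) ∂μ := by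
  rw [← integral_const_mul]
  exact integral_congr_ae (.of_forall fun y ↦ by ring)

variable [BorelSpace E] [FiniteDimensional ℝ E] {μ : Measure E} [μ.IsAddHaarMeasure]
  {ψ f u : E → ℝ} {t : ℝ}

lemma integrable_mul_comp_inv_smul_sub (hψ : Continuous ψ) (hψ_supp : tsupport ψ ⊆ ball 0 1)
    (ht : 0 < t) (hf : Continuous f) (x : E) : Integrable (fun y ↦ f y * ψ (t⁻¹ • (x - y))) μ :=
  Continuous.integrable_of_hasCompactSupport (by fun_prop) <|
    HasCompactSupport.intro (isCompact_closedBall x t) fun y hy ↦ by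
      rw [comp_inv_smul_sub_eq_zero hψ_supp ht hy, mul_zero]

lemma enorm_integral_mul_le {K : E → ℝ} {κ : ℝ≥0} {x : E} (ht : 0 < t) (hK : ∀ y, ‖K y‖₊ ≤ κ)
    (hK' : ∀ y ∉ closedBall x t, K y = 0) (f : E → ℝ) :
    ‖∫ y, f y * K y ∂μ‖ₑ ≤ ENNReal.ofReal (t ^ finrank ℝ E) *
      (κ * μ (closedBall 0 1) * ⨍⁻ y in closedBall x t, ‖f y‖ₑ ∂μ) := by
  have hμ : μ (closedBall x t) ≠ 0 := (measure_closedBall_pos μ x ht).ne'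
  calc ‖∫ y, f y * K y ∂μ‖ₑ
      = ‖∫ y in closedBall x t, f y * K y ∂μ‖ₑ := by
        rw [setIntegral_eq_integral_of_forall_compl_eq_zero fun y hy ↦ by rw [hK' y hy, mul_zero]]
    _ ≤ ∫⁻ y in closedBall x t, ‖f y * K y‖ₑ ∂μ := enorm_integral_le_lintegral_enorm _
    _ ≤ ∫⁻ y in closedBall x t, κ * ‖f y‖ₑ ∂μ := by
        refine lintegral_mono fun y ↦ ?_
        rw [enorm_mul, mul_comm]
        gcongr
        exact ENNReal.coe_le_coe.2 (hK y)
    _ = κ * (μ (closedBall x t) * ⨍⁻ y in closedBall x t, ‖f y‖ₑ ∂μ) := by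
        rw [lintegral_const_mul' _ _ coe_ne_top, setLAverage_eq,
          ENNReal.mul_div_cancel hμ measure_closedBall_lt_top.ne]
    _ = _ := by
        rw [addHaar_closedBall_eq_div_pow_mul one_pos ht x 0, div_one]
        ring

lemma enorm_mollify_le {D : ℝ≥0} (hψ : ∀ y, ‖ψ y‖₊ ≤ D) (hψ_supp : tsupport ψ ⊆ ball 0 1)
    (ht : 0 < t) (f : E → ℝ) (x : E) :
    ‖mollify μ ψ f t x‖ₑ ≤ D * μ (closedBall 0 1) * ⨍⁻ y in closedBall x t, ‖f y‖ₑ ∂μ := by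
  rw [mollify_eq_mul_integral, enorm_mul, Real.enorm_of_nonneg (by positivity), inv_pow,
    ofReal_inv_of_pos (by positivity),
    ENNReal.inv_mul_le_iff (by simpa using by positivity) ofReal_ne_top]
  exact enorm_integral_mul_le ht (fun y ↦ hψ _)
    (fun y hy ↦ comp_inv_smul_sub_eq_zero hψ_supp ht hy) f

lemma mollify_sub_const (hψ : Continuous ψ) (hψ_supp : tsupport ψ ⊆ ball 0 1)
    (hψ_int : ∫ x, ψ x ∂μ = 1) (hf : Continuous f) (ht : 0 < t) (c : ℝ) (x : E) :
    mollify μ ψ (fun y ↦ f y - c) t x = mollify μ ψ f t x - c := by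
  have hscale : ∫ y, ψ (t⁻¹ • (x - y)) ∂μ = t ^ finrank ℝ E := by
    rw [integral_sub_left_eq_self (fun y ↦ ψ (t⁻¹ • y)) μ x,
      Measure.integral_comp_inv_smul_of_nonneg _ _ ht.le, hψ_int, smul_eq_mul, mul_one]
  simp only [mollify_eq_mul_integral, sub_mul]
  rw [integral_sub (integrable_mul_comp_inv_smul_sub hψ hψ_supp ht hf x)
    (integrable_mul_comp_inv_smul_sub hψ hψ_supp ht continuous_const x), integral_const_mul, hscale,
    mul_sub, mul_left_comm _ c, inv_pow, inv_mul_cancel₀ (pow_ne_zero _ ht.ne'), mul_one]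

lemma enorm_mollify_sub_mollify_le {L : ℝ≥0} (hψ : LipschitzWith L ψ)
    (hψ_supp : tsupport ψ ⊆ ball 0 1) (hf : Continuous f) (ht : 0 < t) {z z' : E}
    (hz : dist z' z ≤ t) :
    ‖mollify μ ψ f t z - mollify μ ψ f t z'‖ₑ ≤ ENNReal.ofReal (2 ^ finrank ℝ E * (dist z' z / t)) *
      (L * μ (closedBall 0 1) * ⨍⁻ y in closedBall z (2 * t), ‖f y‖ₑ ∂μ) := by
  set K : E → ℝ := fun y ↦ ψ (t⁻¹ • (z - y)) - ψ (t⁻¹ • (z' - y)) with hK_def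
  have hdiff : mollify μ ψ f t z - mollify μ ψ f t z' =
      t⁻¹ ^ finrank ℝ E * ∫ y, f y * K y ∂μ := by
    simp only [mollify_eq_mul_integral, ← mul_sub, hK_def]
    rw [← integral_sub (integrable_mul_comp_inv_smul_sub hψ.continuous hψ_supp ht hf z)
      (integrable_mul_comp_inv_smul_sub hψ.continuous hψ_supp ht hf z')]
    simp only [mul_sub]
  have hK (y : E) : ‖K y‖₊ ≤ L * (dist z' z / t).toNNReal := by
    have h := hψ.dist_le_mul (t⁻¹ • (z - y)) (t⁻¹ • (z' - y))
    rw [dist_smul₀, dist_sub_right, dist_comm z z', norm_inv, Real.norm_of_nonneg ht.le,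
      inv_mul_eq_div] at h
    rw [← NNReal.coe_le_coe, NNReal.coe_mul, Real.coe_toNNReal _ (by positivity)]
    exact h
  have hK_supp (y : E) (hy : y ∉ closedBall z (2 * t)) : K y = 0 := by
    have hy' : 2 * t < dist y z := by simpa using hy
    change ψ _ - ψ _ = 0
    rw [comp_inv_smul_sub_eq_zero hψ_supp ht (x := z),
      comp_inv_smul_sub_eq_zero hψ_supp ht (x := z'), sub_zero]
    · simpa using by linarith [dist_triangle y z' z]
    · simpa using by linarith
  rw [hdiff, enorm_mul, Real.enorm_of_nonneg (by positivity), inv_pow,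
    ofReal_inv_of_pos (by positivity),
    ENNReal.inv_mul_le_iff (by simpa using by positivity) ofReal_ne_top]
  refine (enorm_integral_mul_le (μ := μ) (by positivity) hK hK_supp f).trans_eq ?_
  rw [mul_pow, ofReal_mul (by positivity), ofReal_mul (by positivity), ENNReal.coe_mul]
  simp only [ENNReal.ofReal]
  ring

lemma mollify_fderiv_apply (hψ : ContDiff ℝ 1 ψ) (hψ_supp : tsupport ψ ⊆ ball 0 1)
    (hu : ContDiff ℝ 1 u) (ht : 0 < t) (c : ℝ) (v x : E) :
    mollify μ ψ (fun y ↦ fderiv ℝ u y v) t x =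
      t⁻¹ * mollify μ (fun y ↦ fderiv ℝ ψ y v) (fun y ↦ u y - c) t x := by
  have hψ' : Continuous fun y ↦ fderiv ℝ ψ y v := 
    (hψ.continuous_fderiv one_ne_zero).clm_apply continuous_const
  have hψ'_supp : tsupport (fun y ↦ fderiv ℝ ψ y v) ⊆ ball 0 1 :=
    (tsupport_fderiv_apply_subset ℝ v).trans hψ_supp
  have huc : Continuous fun y ↦ u y - c := hu.continuous.sub continuous_const
  have hdψ := fderiv_comp_inv_smul_sub_apply (hψ.differentiable one_ne_zero) t x
  have hdu (y : E) : fderiv ℝ (fun y ↦ u y - c) y = fderiv ℝ u y := fderiv_sub_const c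
  have hparts := integral_mul_fderiv_eq_neg_fderiv_mul_of_integrable (μ := μ) (v := v)
    (f := fun y ↦ u y - c) (g := fun y ↦ ψ (t⁻¹ • (x - y)))
    (by
      simp only [hdu]
      exact integrable_mul_comp_inv_smul_sub hψ.continuous hψ_supp ht
        ((hu.continuous_fderiv one_ne_zero).clm_apply continuous_const) x)
    (by
      simp only [hdψ, mul_neg, mul_left_comm _ t⁻¹]
      exact ((integrable_mul_comp_inv_smul_sub hψ' hψ'_supp ht huc x).const_mul t⁻¹).neg)
    (integrable_mul_comp_inv_smul_sub hψ.continuous hψ_supp ht huc x)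
    (fun y _ ↦ ((hu.differentiable one_ne_zero) y).sub_const c)
    (fun y _ ↦ by
      have := hψ.differentiable one_ne_zero
      fun_prop)
  simp only [hdψ, hdu, mul_neg, mul_left_comm _ t⁻¹, integral_neg, integral_const_mul,
    neg_inj] at hparts
  rw [mollify_eq_mul_integral, mollify_eq_mul_integral, mul_left_comm, hparts]

lemma hasFDerivAt_mollify (hψ : Continuous ψ) (hu : ContDiff ℝ 1 u) (hu' : HasCompactSupport u)
    (t : ℝ) (x : E) : ∃ f' : E →L[ℝ] ℝ, HasFDerivAt (mollify μ ψ u t) f' x ∧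
      ∀ v, f' v = mollify μ ψ (fun y ↦ fderiv ℝ u y v) t x := by
  have hloc : LocallyIntegrable (fun y ↦ t⁻¹ ^ finrank ℝ E * ψ (t⁻¹ • y)) μ :=
    Continuous.locallyIntegrable (by fun_prop)
  refine ⟨_, hu'.hasFDerivAt_convolution_left (.mul ℝ ℝ) hu hloc x, fun v ↦ ?_⟩
  have hexists := (hu'.fderiv ℝ).convolutionExists_left ((ContinuousLinearMap.mul ℝ ℝ).precompL E)
    (hu.continuous_fderiv one_ne_zero) hloc x
  rw [convolution_def, ContinuousLinearMap.integral_apply hexists]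
  rfl

lemma continuous_mollify (hψ : Continuous ψ) (hf : Continuous f) (hf' : HasCompactSupport f)
    (t : ℝ) : Continuous (mollify μ ψ f t) := by
  have hrestrict : mollify μ ψ f t = fun x ↦
      ∫ y in tsupport f, f y * (t⁻¹ ^ finrank ℝ E * ψ (t⁻¹ • (x - y))) ∂μ := by
    funext x
    refine (setIntegral_eq_integral_of_forall_compl_eq_zero fun y hy ↦ ?_).symm
    rw [image_eq_zero_of_notMem_tsupport hy, zero_mul]
  rw [hrestrict]
  exact continuous_parametric_integral_of_continuous (by fun_prop) hf'

end Mollify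

section GradMax

variable {n : ℕ}

lemma enorm_le_sum_enorm_apply_single (f : 𝔼 n →L[ℝ] ℝ) :
    ‖f‖ₑ ≤ ∑ j, ‖f (EuclideanSpace.single j 1)‖ₑ := by
  suffices h : ‖f‖₊ ≤ ∑ j, ‖f (EuclideanSpace.single j 1)‖₊ by
    simpa only [enorm_eq_nnnorm, ← ENNReal.ofNNReal_finsetSum, ENNReal.coe_le_coe] using h
  refine f.opNNNorm_le_bound _ fun v ↦ ?_
  have hv : v = ∑ j, v j • EuclideanSpace.single j (1 : ℝ) := by
    simpa using ((EuclideanSpace.basisFun (Fin n) ℝ).sum_repr v).symm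
  calc ‖f v‖₊ = ‖∑ j, v j * f (EuclideanSpace.single j 1)‖₊ := by
        conv_lhs => rw [hv, map_sum]
        simp only [map_smul, smul_eq_mul]
    _ ≤ ∑ j, ‖v j‖₊ * ‖f (EuclideanSpace.single j 1)‖₊ := by
        simpa only [nnnorm_mul] using nnnorm_sum_le Finset.univ fun j ↦
          v j * f (EuclideanSpace.single j 1)
    _ ≤ ∑ j, ‖v‖₊ * ‖f (EuclideanSpace.single j 1)‖₊ := by
        gcongr with j
        exact PiLp.nnnorm_apply_le v j
    _ = _ := by rw [← Finset.mul_sum, mul_comm]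

/-- `ψ` is a `C¹` kernel of integral one supported in the unit ball, and `D` bounds `ψ`, its
partial derivatives, and the Lipschitz constants of the latter. -/
structure IsMollifierWith (ψ : 𝔼 n → ℝ) (D : ℝ≥0) : Prop where
  contDiff : ContDiff ℝ 1 ψ
  tsupport_subset : tsupport ψ ⊆ ball 0 1
  integral_eq_one : ∫ x, ψ x = 1
  nnnorm_le : ∀ y, ‖ψ y‖₊ ≤ D
  nnnorm_pderivIdx_le : ∀ j y, ‖pderivIdx n j ψ y‖₊ ≤ D
  lipschitzWith_pderivIdx : ∀ j, LipschitzWith D (pderivIdx n j ψ)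

lemma exists_nnnorm_le_of_hasCompactSupport {X : Type*} [TopologicalSpace X] {f : X → ℝ}
    (hf : Continuous f) (hf' : HasCompactSupport f) : ∃ D : ℝ≥0, ∀ y, ‖f y‖₊ ≤ D := by
  obtain ⟨C, hC⟩ := hf'.exists_bound_of_continuous hf
  exact ⟨C.toNNReal, fun y ↦ NNReal.le_toNNReal_of_coe_le (hC y)⟩

lemma exists_isMollifierWith {ψ : 𝔼 n → ℝ} (hψ : ContDiff ℝ 2 ψ) (hψ_supp : tsupport ψ ⊆ ball 0 1)
    (hψ_int : ∫ x, ψ x = 1) : ∃ D, IsMollifierWith ψ D := by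
  have hcompact : HasCompactSupport ψ :=
    (isCompact_closedBall 0 1).of_isClosed_subset (isClosed_tsupport ψ)
      (hψ_supp.trans ball_subset_closedBall)
  have hderiv (j : Fin n) : ContDiff ℝ 1 (pderivIdx n j ψ) :=
    (hψ.fderiv_right (m := 1) le_rfl).clm_apply contDiff_const
  have hderiv_compact (j : Fin n) : HasCompactSupport (pderivIdx n j ψ) :=
    hcompact.fderiv_apply (𝕜 := ℝ) _
  obtain ⟨D₀, hD₀⟩ := exists_nnnorm_le_of_hasCompactSupport hψ.continuous hcompact
  choose D₁ hD₁ using fun j ↦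
    exists_nnnorm_le_of_hasCompactSupport (hderiv j).continuous (hderiv_compact j)
  choose D₂ hD₂ using fun j ↦
    (hderiv j).lipschitzWith_of_hasCompactSupport (hderiv_compact j) one_ne_zero
  have hle₁ (j : Fin n) : D₁ j ≤ ∑ i, D₁ i := Finset.single_le_sum_of_canonicallyOrdered (by simp)
  have hle₂ (j : Fin n) : D₂ j ≤ ∑ i, D₂ i := Finset.single_le_sum_of_canonicallyOrdered (by simp)
  exact ⟨D₀ + ∑ i, D₁ i + ∑ i, D₂ i, hψ.of_le one_le_two, hψ_supp, hψ_int,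
    fun y ↦ (hD₀ y).trans (le_self_add.trans le_self_add),
    fun j y ↦ (hD₁ j y).trans ((hle₁ j).trans (le_add_self.trans le_self_add)),
    fun j ↦ (hD₂ j).weaken ((hle₂ j).trans le_add_self)⟩

/-- The sum over the coordinates `j` of the smooth maximal functions of `∂_j u`. -/
def gradMax (ψ u : 𝔼 n → ℝ) (x : 𝔼 n) : ℝ≥0∞ := ∑ j, convMax n ψ u j x

variable {ψ u : 𝔼 n → ℝ} {D : ℝ≥0} {t : ℝ}

lemma convMax_eq_iSup_enorm_mollify (ψ u : 𝔼 n → ℝ) (j : Fin n) (x : 𝔼 n) :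
    convMax n ψ u j x =
      ⨆ t : {s : ℝ // 0 < s}, ‖mollify volume ψ (pderivIdx n j u) t x‖ₑ := by
  simp only [convMax, mollify, finrank_euclideanSpace_fin, ← Real.enorm_eq_ofReal_abs]

lemma enorm_mollify_pderivIdx_le_convMax (ht : 0 < t) (ψ u : 𝔼 n → ℝ) (j : Fin n) (x : 𝔼 n) :
    ‖mollify volume ψ (pderivIdx n j u) t x‖ₑ ≤ convMax n ψ u j x := by
  rw [convMax_eq_iSup_enorm_mollify]
  exact le_iSup (fun t : {s : ℝ // 0 < s} ↦ ‖mollify volume ψ (pderivIdx n j u) t x‖ₑ) ⟨t, ht⟩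

lemma continuous_pderivIdx (hu : ContDiff ℝ 1 u) (j : Fin n) : Continuous (pderivIdx n j u) :=
  (hu.continuous_fderiv one_ne_zero).clm_apply continuous_const

lemma measurable_convMax (hψ : Continuous ψ) (hu : ContDiff ℝ 1 u) (hu' : HasCompactSupport u)
    (j : Fin n) : Measurable (convMax n ψ u j) := by
  rw [funext (convMax_eq_iSup_enorm_mollify ψ u j)]
  refine (lowerSemicontinuous_iSup fun t ↦ Continuous.lowerSemicontinuous ?_).measurable
  exact (continuous_mollify hψ (continuous_pderivIdx hu j) (hu'.fderiv_apply (𝕜 := ℝ) _) _).enorm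

lemma measurable_gradMax (hψ : Continuous ψ) (hu : ContDiff ℝ 1 u) (hu' : HasCompactSupport u) :
    Measurable (gradMax ψ u) :=
  Finset.measurable_fun_sum _ fun j _ ↦ measurable_convMax hψ hu hu' j

lemma IsMollifierWith.mollify_pderivIdx (hψ : IsMollifierWith ψ D) (hu : ContDiff ℝ 1 u)
    (ht : 0 < t) (c : ℝ) (j : Fin n) (x : 𝔼 n) : mollify volume ψ (pderivIdx n j u) t x =
      t⁻¹ * mollify volume (pderivIdx n j ψ) (fun y ↦ u y - c) t x :=
  mollify_fderiv_apply hψ.contDiff hψ.tsupport_subset hu ht c _ x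

lemma IsMollifierWith.tsupport_pderivIdx_subset (hψ : IsMollifierWith ψ D) (j : Fin n) :
    tsupport (pderivIdx n j ψ) ⊆ ball 0 1 :=
  (tsupport_fderiv_apply_subset ℝ _).trans hψ.tsupport_subset

lemma IsMollifierWith.convMax_le_mul_calderonMaximal (hψ : IsMollifierWith ψ D)
    (hu : ContDiff ℝ 1 u) (j : Fin n) (x : 𝔼 n) :
    convMax n ψ u j x ≤ D * volume (closedBall (0 : 𝔼 n) 1) * calderonMaximal volume u x := by
  rw [convMax_eq_iSup_enorm_mollify]
  refine iSup_le fun ⟨t, ht⟩ ↦ ?_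
  rw [hψ.mollify_pderivIdx hu ht (u x), enorm_mul, Real.enorm_of_nonneg (by positivity),
    ofReal_inv_of_pos ht, ENNReal.inv_mul_le_iff (by simpa using ht) ofReal_ne_top,
    mul_left_comm]
  refine (enorm_mollify_le (hψ.nnnorm_pderivIdx_le j) (hψ.tsupport_pderivIdx_subset j) ht _ x).trans
    ?_
  gcongr
  exact setLAverage_enorm_sub_le_mul_calderonMaximal ht u x

lemma enorm_mollify_sub_mollify_le_of_forall_sum_le (hψ : Continuous ψ) (hu : ContDiff ℝ 1 u)
    (hu' : HasCompactSupport u) {s : ℝ} {x y : 𝔼 n} (ht : 0 < t) {B : ℝ≥0∞}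
    (hB : ∀ z ∈ closedBall x t, ∑ j, ‖mollify volume ψ (pderivIdx n j u) s z‖ₑ ≤ B)
    (hy : y ∈ closedBall x t) :
    ‖mollify volume ψ u s y - mollify volume ψ u s x‖ₑ ≤ ENNReal.ofReal t * B := by
  obtain rfl | hB_top := eq_or_ne B ⊤
  · simp [mul_top, ht]
  lift B to ℝ≥0 using hB_top
  choose f' hf' hf'_apply using hasFDerivAt_mollify (μ := volume) hψ hu hu' s
  have hnorm (z : 𝔼 n) (hz : z ∈ closedBall x t) : ‖f' z‖₊ ≤ B := by
    rw [← ENNReal.coe_le_coe]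
    refine (enorm_le_sum_enorm_apply_single _).trans ((Finset.sum_congr rfl fun j _ ↦ ?_).trans_le
      (hB z hz))
    rw [hf'_apply]
    rfl
  have hlip := (convex_closedBall x t).lipschitzOnWith_of_nnnorm_hasFDerivWithin_le
    (fun z _ ↦ (hf' z).hasFDerivWithinAt) hnorm
  rw [← edist_eq_enorm_sub, mul_comm]
  refine (hlip hy (mem_closedBall_self ht.le)).trans ?_
  gcongr
  rw [edist_dist]
  exact ofReal_le_ofReal hy

end GradMax

section SharpEstimate

variable {n : ℕ} {ψ u : 𝔼 n → ℝ} {D : ℝ≥0} {σ ε ρ t : ℝ}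

lemma IsMollifierWith.enorm_mollify_sub_le (hψ : IsMollifierWith ψ D) (hu : Continuous u)
    (ht : 0 < t) (c : ℝ) (x : 𝔼 n) : ‖mollify volume ψ u t x - c‖ₑ ≤
      D * volume (closedBall (0 : 𝔼 n) 1) * ⨍⁻ y in closedBall x t, ‖u y - c‖ₑ ∂volume := by
  rw [← mollify_sub_const hψ.contDiff.continuous hψ.tsupport_subset hψ.integral_eq_one hu ht]
  exact enorm_mollify_le hψ.nnnorm_le hψ.tsupport_subset ht _ x

lemma IsMollifierWith.setLAverage_enorm_sub_mollify_le (hψ : IsMollifierWith ψ D)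
    (hu : Continuous u) {s : ℝ} (hs : 0 < s) {w y : 𝔼 n} (hy : y ∈ closedBall w s) :
    ⨍⁻ z in closedBall w s, ‖u z - mollify volume ψ u s z‖ₑ ∂volume ≤
      (2 ^ (n + 1) + D * volume (closedBall (0 : 𝔼 n) 1) * 3 ^ (n + 1)) * ENNReal.ofReal s *
        calderonMaximal volume u y := by
  set N := calderonMaximal volume u y
  set A := D * volume (closedBall (0 : 𝔼 n) 1)
  have hyw : dist w y ≤ s := by rwa [dist_comm]
  have haverage (k : ℕ) {v : 𝔼 n} (hv : dist v y + s ≤ k * s) :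
      ⨍⁻ z in closedBall v s, ‖u z - u y‖ₑ ∂volume ≤ k ^ (n + 1) * ENNReal.ofReal s * N := by
    refine (setLAverage_enorm_sub_le_mul_calderonMaximal_of_dist_add_le hs hv u).trans_eq ?_
    rw [mul_div_cancel_right₀ _ hs.ne', finrank_euclideanSpace_fin, ← mul_assoc, ← pow_succ,
      ofReal_mul (by positivity), ofReal_pow (by positivity), ofReal_natCast]
  have hmollify (z : 𝔼 n) (hz : z ∈ closedBall w s) :
      ‖mollify volume ψ u s z - u y‖ₑ ≤ A * (3 ^ (n + 1) * ENNReal.ofReal s * N) := by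
    refine (hψ.enorm_mollify_sub_le hu hs (u y) z).trans ?_
    gcongr
    refine mod_cast haverage 3 ?_
    push_cast
    linarith [dist_triangle z w y, mem_closedBall.1 hz]
  calc ⨍⁻ z in closedBall w s, ‖u z - mollify volume ψ u s z‖ₑ ∂volume
      ≤ ⨍⁻ z in closedBall w s,
          ‖u z - u y‖ₑ + A * (3 ^ (n + 1) * ENNReal.ofReal s * N) ∂volume := by
        refine setLAverage_mono_on measurableSet_closedBall fun z hz ↦ ?_
        rw [← sub_sub_sub_cancel_right _ _ (u y)]
        exact (enorm_sub_le).trans (add_le_add_right (hmollify z hz) _)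
    _ = (⨍⁻ z in closedBall w s, ‖u z - u y‖ₑ ∂volume) + A * (3 ^ (n + 1) * ENNReal.ofReal s * N) :=
        setLAverage_add_const (measure_closedBall_pos volume w hs).ne'
          measure_closedBall_lt_top.ne _ _
    _ ≤ 2 ^ (n + 1) * ENNReal.ofReal s * N + A * (3 ^ (n + 1) * ENNReal.ofReal s * N) := by
        gcongr
        exact mod_cast haverage 2 (by push_cast; linarith)
    _ = _ := by ring

lemma IsMollifierWith.setLAverage_enorm_sub_mollify_le_mul_powMaximal (hψ : IsMollifierWith ψ D)
    (hu : ContDiff ℝ 1 u) (hu' : HasCompactSupport u) (hσ : 0 < σ) (hσ1 : σ ≤ 1) (hε : 0 < ε)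
    (hε1 : ε ≤ 1) (ht : 0 < t) (x : 𝔼 n) :
    ⨍⁻ y in closedBall x t, ‖u y - mollify volume ψ u (ε * t) y‖ₑ ∂volume ≤ ENNReal.ofReal t *
      (2 ^ n * (2 ^ (n + 1) + D * volume (closedBall (0 : 𝔼 n) 1) * 3 ^ (n + 1)) *
        ENNReal.ofReal ((3 / ε) ^ (n / σ * (1 - σ)) * ε) *
          powMaximal volume σ (calderonMaximal volume u) x) := by
  have hmeas : Measurable fun y ↦ ‖u y - mollify volume ψ u (ε * t) y‖ₑ :=
    (hu.continuous.sub
      (continuous_mollify hψ.contDiff.continuous hu.continuous hu' _)).enorm.measurable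
  have hvol : volume (closedBall (0 : 𝔼 n) 1) ≠ ∞ := measure_closedBall_lt_top.ne
  refine (setLAverage_le_mul_powMaximal hσ hσ1 hε hε1 ht hmeas (fun w y hy ↦
    hψ.setLAverage_enorm_sub_mollify_le hu.continuous (by positivity) hy) x).trans_eq ?_
  rw [powMaximal_const_mul hσ (by finiteness), ofReal_mul (by positivity),
    ofReal_mul (by positivity), finrank_euclideanSpace_fin]
  ring

lemma IsMollifierWith.enorm_mollify_pderivIdx_sub_le (hψ : IsMollifierWith ψ D)
    (hu : ContDiff ℝ 1 u) (hε : 0 < ε) (hε1 : ε ≤ 1) (hρε : ρ ≤ ε) (ht : 0 < t) {x z z' : 𝔼 n}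
    (hz : z ∈ closedBall x t) (hz' : z' ∈ closedBall z (ρ * t)) (j : Fin n) :
    ‖mollify volume ψ (pderivIdx n j u) (ε * t) z -
        mollify volume ψ (pderivIdx n j u) (ε * t) z'‖ₑ ≤
      ENNReal.ofReal (3 ^ (n + 1) / ε ^ (n + 2) * ρ) * (D * volume (closedBall (0 : 𝔼 n) 1)) *
        calderonMaximal volume u x := by
  have hs : 0 < ε * t := by positivity
  have hst : ε * t ≤ t := mul_le_of_le_one_left ht.le hε1
  have hdist : dist z' z ≤ ρ * t := hz'
  have hdist' : dist z' z ≤ ε * t := hdist.trans (by gcongr)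
  have hρ : 0 ≤ ρ := nonneg_of_mul_nonneg_left (dist_nonneg.trans hdist) ht
  have haverage : ⨍⁻ y in closedBall z (2 * (ε * t)), ‖u y - u x‖ₑ ∂volume ≤
      ENNReal.ofReal ((3 * t / (2 * (ε * t))) ^ n * (3 * t)) * calderonMaximal volume u x := by
    simpa only [finrank_euclideanSpace_fin] using
      setLAverage_enorm_sub_le_mul_calderonMaximal_of_dist_add_le (by positivity)
        (by linarith [mem_closedBall.1 hz]) u
  rw [hψ.mollify_pderivIdx hu hs (u x), hψ.mollify_pderivIdx hu hs (u x), ← mul_sub, enorm_mul,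
    Real.enorm_of_nonneg (by positivity)]
  calc ENNReal.ofReal (ε * t)⁻¹ * _
      ≤ ENNReal.ofReal (ε * t)⁻¹ * (ENNReal.ofReal (2 ^ n * (ρ * t / (ε * t))) *
        (D * volume (closedBall (0 : 𝔼 n) 1) *
          (ENNReal.ofReal ((3 * t / (2 * (ε * t))) ^ n * (3 * t)) *
            calderonMaximal volume u x))) := by
        refine mul_le_mul_right ((enorm_mollify_sub_mollify_le (hψ.lipschitzWith_pderivIdx j)
          (hψ.tsupport_pderivIdx_subset j) (hu.continuous.sub continuous_const) hs
            hdist').trans ?_) _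
        rw [finrank_euclideanSpace_fin]
        gcongr
        exact haverage
    _ = ENNReal.ofReal ((ε * t)⁻¹ * (2 ^ n * (ρ * t / (ε * t))) *
          ((3 * t / (2 * (ε * t))) ^ n * (3 * t))) * (D * volume (closedBall (0 : 𝔼 n) 1)) *
            calderonMaximal volume u x := by
        rw [ofReal_mul (p := (ε * t)⁻¹ * _) (by positivity), ofReal_mul (p := (ε * t)⁻¹)
          (by positivity)]
        ring
    _ = _ := by
        congr 3
        rw [div_pow, mul_pow, mul_pow, mul_pow]
        field_simp
        ring

lemma IsMollifierWith.sum_enorm_mollify_pderivIdx_le (hψ : IsMollifierWith ψ D)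
    (hu : ContDiff ℝ 1 u) (hσ : 0 < σ) (hε : 0 < ε) (hε1 : ε ≤ 1) (hρ : 0 < ρ) (hρε : ρ ≤ ε)
    (ht : 0 < t) {x z : 𝔼 n} (hz : z ∈ closedBall x t) :
    ∑ j, ‖mollify volume ψ (pderivIdx n j u) (ε * t) z‖ₑ ≤
      ENNReal.ofReal (3 ^ (n + 1) / ε ^ (n + 2) * ρ) *
          (n * (D * volume (closedBall (0 : 𝔼 n) 1))) * calderonMaximal volume u x +
        ENNReal.ofReal ((2 / ρ) ^ (n / σ)) * powMaximal volume σ (gradMax ψ u) x := by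
  rw [← tsub_le_iff_left, ← mul_div_mul_right 2 ρ ht.ne']
  have hball : dist z x + ρ * t ≤ 2 * t := by nlinarith [mem_closedBall.1 hz]
  -- On `closedBall z (ρ * t)` the mollified derivatives are nearly constant and at most `gradMax`.
  refine (le_mul_powMaximal_of_forall_le (μ := volume) (f := gradMax ψ u) hσ (by positivity) hball
    fun z' hz' ↦ ?_).trans_eq (by rw [finrank_euclideanSpace_fin])
  rw [tsub_le_iff_left]
  calc ∑ j, ‖mollify volume ψ (pderivIdx n j u) (ε * t) z‖ₑ
      ≤ ∑ j, (ENNReal.ofReal (3 ^ (n + 1) / ε ^ (n + 2) * ρ) *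
          (D * volume (closedBall (0 : 𝔼 n) 1)) * calderonMaximal volume u x +
            convMax n ψ u j z') := by
        refine Finset.sum_le_sum fun j _ ↦ ?_
        rw [← sub_add_cancel (mollify volume ψ (pderivIdx n j u) (ε * t) z)
          (mollify volume ψ (pderivIdx n j u) (ε * t) z')]
        exact (enorm_add_le _ _).trans (add_le_add
          (hψ.enorm_mollify_pderivIdx_sub_le hu hε hε1 hρε ht hz hz' j)
          (enorm_mollify_pderivIdx_le_convMax (by positivity) ψ u j z'))
    _ = _ := by
        rw [Finset.sum_add_distrib, Finset.sum_const, Finset.card_univ, Fintype.card_fin,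
          nsmul_eq_mul, gradMax]
        ring

lemma IsMollifierWith.calderonMaximal_le (hψ : IsMollifierWith ψ D) (hu : ContDiff ℝ 1 u)
    (hu' : HasCompactSupport u) (hσ : 0 < σ) (hσ1 : σ ≤ 1) (hε : 0 < ε) (hε1 : ε ≤ 1)
    (hρ : 0 < ρ) (hρε : ρ ≤ ε) (x : 𝔼 n) :
    calderonMaximal volume u x ≤
      2 ^ n * (2 ^ (n + 1) + D * volume (closedBall (0 : 𝔼 n) 1) * 3 ^ (n + 1)) *
          ENNReal.ofReal ((3 / ε) ^ (n / σ * (1 - σ)) * ε) *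
            powMaximal volume σ (calderonMaximal volume u) x +
        (ENNReal.ofReal (3 ^ (n + 1) / ε ^ (n + 2) * ρ) *
            (n * (D * volume (closedBall (0 : 𝔼 n) 1))) * calderonMaximal volume u x +
          ENNReal.ofReal ((2 / ρ) ^ (n / σ)) * powMaximal volume σ (gradMax ψ u) x) +
        D * volume (closedBall (0 : 𝔼 n) 1) * (ENNReal.ofReal ε * calderonMaximal volume u x) := by
  refine calderonMaximal_le_iff.2 fun t ht ↦ ?_
  set v := mollify volume ψ u (ε * t)
  have hψc := hψ.contDiff.continuous
  have hderiv (y : 𝔼 n) (hy : y ∈ closedBall x t) := enorm_mollify_sub_mollify_le_of_forall_sum_le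
    hψc hu hu' ht (fun z ↦ hψ.sum_enorm_mollify_pderivIdx_le hu hσ hε hε1 hρ hρε ht) hy
  have hcentre : ‖v x - u x‖ₑ ≤ ENNReal.ofReal t * (D * volume (closedBall (0 : 𝔼 n) 1) *
      (ENNReal.ofReal ε * calderonMaximal volume u x)) := by
    refine (hψ.enorm_mollify_sub_le hu.continuous (by positivity) (u x) x).trans ?_
    rw [mul_left_comm (ENNReal.ofReal t), ← mul_assoc (ENNReal.ofReal t),
      mul_comm (ENNReal.ofReal t), ← ofReal_mul hε.le]
    gcongr
    exact setLAverage_enorm_sub_le_mul_calderonMaximal (by positivity) u x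
  calc ⨍⁻ y in closedBall x t, ‖u y - u x‖ₑ ∂volume
      ≤ ⨍⁻ y in closedBall x t, ‖u y - v y‖ₑ + (_ + _) ∂volume := by
        refine setLAverage_mono_on measurableSet_closedBall fun y hy ↦ ?_
        rw [← sub_add_sub_cancel (u y) (v y) (u x), ← sub_add_sub_cancel (v y) (v x) (u x)]
        exact (enorm_add_le _ _).trans (add_le_add_right ((enorm_add_le _ _).trans
          (add_le_add (hderiv y hy) hcentre)) _)
    _ = ⨍⁻ y in closedBall x t, ‖u y - v y‖ₑ ∂volume + (_ + _) :=
        setLAverage_add_const (measure_closedBall_pos volume x ht).ne'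
          measure_closedBall_lt_top.ne _ _
    _ ≤ _ := by
        rw [mul_add _ (_ + _), mul_add _ _ (_ + _), add_assoc]
        gcongr
        exact hψ.setLAverage_enorm_sub_mollify_le_mul_powMaximal hu hu' hσ hσ1 hε hε1 ht x

lemma tendsto_div_rpow_mul_nhdsGT_zero {c a : ℝ} (hc : 0 ≤ c) (ha : a < 1) :
    Tendsto (fun ε : ℝ ↦ (c / ε) ^ a * ε) (𝓝[>] 0) (𝓝 0) := by
  have hlim : Tendsto (fun ε : ℝ ↦ c ^ a * ε ^ (1 - a)) (𝓝[>] 0) (𝓝 (c ^ a * 0 ^ (1 - a))) :=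
    ((Real.continuous_rpow_const (by linarith)).tendsto 0 |>.const_mul _).mono_left
      nhdsWithin_le_nhds
  rw [Real.zero_rpow (by linarith), mul_zero] at hlim
  refine hlim.congr' (eventually_nhdsWithin_of_forall fun ε hε ↦ ?_)
  have hε : 0 < ε := hε
  change c ^ a * ε ^ (1 - a) = (c / ε) ^ a * ε
  rw [Real.div_rpow hc hε.le, Real.rpow_sub hε, Real.rpow_one]
  ring

lemma exists_scales_add_le {a c : ℝ} (ha : a < 1) (hc : 0 ≤ c) (b : ℝ → ℝ) (A B C : ℝ≥0)
    {η : ℝ≥0∞} (hη : η ≠ 0) : ∃ ε ρ : ℝ, (0 < ε ∧ ε ≤ 1) ∧ (0 < ρ ∧ ρ ≤ ε) ∧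
      A * ENNReal.ofReal ((c / ε) ^ a * ε) + B * ENNReal.ofReal ε +
        C * ENNReal.ofReal (b ε * ρ) ≤ η := by
  have hη2 : 0 < η / 2 := ENNReal.half_pos hη
  have hlim_id : Tendsto (fun ε : ℝ ↦ ε) (𝓝[>] 0) (𝓝 0) := nhdsWithin_le_nhds
  have hlim (A : ℝ≥0) {f : ℝ → ℝ} (hf : Tendsto f (𝓝[>] 0) (𝓝 0)) :
      Tendsto (fun ε ↦ A * ENNReal.ofReal (f ε)) (𝓝[>] 0) (𝓝 0) := by
    simpa using ENNReal.Tendsto.const_mul (a := A) (tendsto_ofReal hf) (.inr coe_ne_top)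
  have hlim_ε := (hlim A (tendsto_div_rpow_mul_nhdsGT_zero hc ha)).add (hlim B hlim_id)
  rw [add_zero] at hlim_ε
  obtain ⟨ε, hε_small, hε⟩ :=
    ((hlim_ε.eventually_lt_const hη2).and (Ioc_mem_nhdsGT one_pos)).exists
  have hlim_ρ := hlim C (f := fun ρ ↦ b ε * ρ) (by simpa using hlim_id.const_mul (b ε))
  obtain ⟨ρ, hρ_small, hρ⟩ :=
    ((hlim_ρ.eventually_lt_const hη2).and (Ioc_mem_nhdsGT hε.1)).exists
  exact ⟨ε, ρ, hε, hρ, (add_le_add hε_small.le hρ_small.le).trans_eq (ENNReal.add_halves η)⟩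

lemma div_mul_one_sub_lt_one (hσ : (n : ℝ) / (n + 1) < σ) : n / σ * (1 - σ) < 1 := by
  have hσ0 : 0 < σ := lt_of_le_of_lt (by positivity) hσ
  rw [div_lt_iff₀ (by positivity)] at hσ
  rw [div_mul_eq_mul_div, div_lt_one hσ0]
  linarith

lemma IsMollifierWith.exists_calderonMaximal_le (hψ : IsMollifierWith ψ D)
    (hσ : (n : ℝ) / (n + 1) < σ) (hσ1 : σ ≤ 1) {η : ℝ≥0∞} (hη : η ≠ 0) :
    ∃ B : ℝ≥0, ∀ u, ContDiff ℝ 1 u → HasCompactSupport u → ∀ x,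
      calderonMaximal volume u x ≤ η * powMaximal volume σ (calderonMaximal volume u) x +
        B * powMaximal volume σ (gradMax ψ u) x := by
  have hσ0 : 0 < σ := lt_of_le_of_lt (by positivity) hσ
  obtain ⟨A, hA⟩ : ∃ A : ℝ≥0, A = D * volume (closedBall (0 : 𝔼 n) 1) :=
    ⟨_, coe_toNNReal (mul_ne_top coe_ne_top measure_closedBall_lt_top.ne)⟩
  obtain ⟨C, hC⟩ : ∃ C : ℝ≥0, C = 2 ^ n * (2 ^ (n + 1) + (A : ℝ≥0∞) * 3 ^ (n + 1)) :=
    ⟨_, coe_toNNReal (by finiteness)⟩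
  obtain ⟨ε, ρ, ⟨hε, hε1⟩, ⟨hρ, hρε⟩, hscales⟩ := exists_scales_add_le
    (div_mul_one_sub_lt_one hσ) zero_le_three (fun ε ↦ 3 ^ (n + 1) / ε ^ (n + 2)) C A (n * A) hη
  refine ⟨((2 / ρ) ^ (n / σ)).toNNReal, fun u hu hu' x ↦ ?_⟩
  have hN := le_powMaximal_of_lowerSemicontinuous (μ := volume) hσ0
    (lowerSemicontinuous_calderonMaximal (μ := volume) hu.continuous) x
  have hbound := hψ.calderonMaximal_le hu hu' hσ0 hσ1 hε hε1 hρ hρε x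
  rw [← hA, ← hC] at hbound
  set N := calderonMaximal volume u x
  set M := powMaximal volume σ (calderonMaximal volume u) x
  set G := powMaximal volume σ (gradMax ψ u) x
  calc N ≤ C * ENNReal.ofReal ((3 / ε) ^ (n / σ * (1 - σ)) * ε) * M +
          (ENNReal.ofReal (3 ^ (n + 1) / ε ^ (n + 2) * ρ) * (n * A) * N +
            ENNReal.ofReal ((2 / ρ) ^ (n / σ)) * G) + A * (ENNReal.ofReal ε * N) :=
        hbound
    _ ≤ C * ENNReal.ofReal ((3 / ε) ^ (n / σ * (1 - σ)) * ε) * M +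
          (ENNReal.ofReal (3 ^ (n + 1) / ε ^ (n + 2) * ρ) * (n * A) * M +
            ENNReal.ofReal ((2 / ρ) ^ (n / σ)) * G) + A * (ENNReal.ofReal ε * M) := by gcongr
    _ = (C * ENNReal.ofReal ((3 / ε) ^ (n / σ * (1 - σ)) * ε) + A * ENNReal.ofReal ε +
          (n * A : ℝ≥0) * ENNReal.ofReal (3 ^ (n + 1) / ε ^ (n + 2) * ρ)) * M +
            ENNReal.ofReal ((2 / ρ) ^ (n / σ)) * G := by push_cast; ring
    _ ≤ η * M + ENNReal.ofReal ((2 / ρ) ^ (n / σ)) * G := by gcongr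

lemma lintegral_gradMax_rpow_le (hψ : Continuous ψ) (hu : ContDiff ℝ 1 u)
    (hu' : HasCompactSupport u) {p : ℝ} (hp : 0 < p) (hp1 : p ≤ 1) :
    ∫⁻ x, gradMax ψ u x ^ p ≤ ∑ j, ∫⁻ x, convMax n ψ u j x ^ p := by
  rw [← lintegral_finsetSum _ fun j _ ↦ (measurable_convMax hψ hu hu' j).pow_const p]
  exact lintegral_mono fun x ↦ Finset.le_sum_of_subadditive (fun a : ℝ≥0∞ ↦ a ^ p)
    (ENNReal.zero_rpow_of_pos hp).le (fun a b ↦ ENNReal.rpow_add_le_add_rpow a b hp.le hp1) _ _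

lemma IsMollifierWith.exists_lintegral_calderonMaximal_rpow_le (hψ : IsMollifierWith ψ D) {p : ℝ}
    (hp : (n : ℝ) / (n + 1) < p) (hp1 : p ≤ 1) :
    ∃ C : ℝ≥0, ∀ u, ContDiff ℝ 1 u → HasCompactSupport u →
      ∫⁻ x, calderonMaximal volume u x ^ p ≤ C * ∫⁻ x, gradMax ψ u x ^ p := by
  obtain ⟨σ, hσ, hσp⟩ := exists_between hp
  have hσ0 : 0 < σ := lt_of_le_of_lt (by positivity) hσ
  obtain ⟨η, hη, habsorb⟩ :=
    exists_lintegral_rpow_le_of_forall_le_powMaximal (volume : Measure (𝔼 n)) hσ0 hσp hp1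
  obtain ⟨B, hB⟩ := hψ.exists_calderonMaximal_le hσ (hσp.le.trans hp1) hη
  obtain ⟨C, hC⟩ := habsorb B
  refine ⟨C, fun u hu hu' ↦ ?_⟩
  obtain ⟨L, hL⟩ := hu.lipschitzWith_of_hasCompactSupport hu' one_ne_zero
  exact hC _ _ (lowerSemicontinuous_calderonMaximal hu.continuous).measurable
    (measurable_gradMax hψ.contDiff.continuous hu hu')
    (lintegral_calderonMaximal_rpow_ne_top hL hu' (by simpa using hp)) (hB u hu hu')

end SharpEstimate

section CutOff

variable {E F : Type*} [NormedAddCommGroup E] [MeasurableSpace E] [NormedAddCommGroup F]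
  [NormedSpace ℝ F] {μ : Measure E}

lemma calderonMaximal_const_smul_le (c : ℝ) (u : E → F) (x : E) :
    calderonMaximal μ (fun y ↦ c • u y) x ≤ ‖c‖ₑ * calderonMaximal μ u x := by
  refine calderonMaximal_le_iff.2 fun t ht ↦ ?_
  simp only [← smul_sub, enorm_smul]
  rw [setLAverage_const_mul enorm_ne_top, mul_left_comm]
  gcongr
  exact setLAverage_enorm_sub_le_mul_calderonMaximal ht u x

lemma setLAverage_enorm_smul_sub_le_mul_calderonMaximal [BorelSpace E] {ζ : E → ℝ}
    (hζ : ∀ y, ‖ζ y‖ₑ ≤ 1) {t : ℝ} (ht : 0 < t) (u : E → F) (x : E) :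
    ⨍⁻ y in closedBall x t, ‖ζ y • (u y - u x)‖ₑ ∂μ ≤ ENNReal.ofReal t * calderonMaximal μ u x := by
  refine le_trans (setLAverage_mono_on measurableSet_closedBall fun y _ ↦ ?_)
    (setLAverage_enorm_sub_le_mul_calderonMaximal ht u x)
  rw [enorm_smul]
  exact mul_le_of_le_one_left' (hζ y)

variable [BorelSpace E] [NormedSpace ℝ E] [FiniteDimensional ℝ E] [μ.IsAddHaarMeasure]
  {u : E → F} {ζ : E → ℝ} {Λ : ℝ≥0}

lemma calderonMaximal_smul_sub_const_le (hζ : LipschitzWith Λ ζ) (hζ1 : ∀ y, ‖ζ y‖ₑ ≤ 1)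
    (u : E → F) (b : F) (x : E) :
    calderonMaximal μ (fun y ↦ ζ y • (u y - b)) x ≤
      calderonMaximal μ u x + Λ * ‖u x - b‖ₑ := by
  refine calderonMaximal_le_iff.2 fun t ht ↦ ?_
  calc ⨍⁻ y in closedBall x t, ‖ζ y • (u y - b) - ζ x • (u x - b)‖ₑ ∂μ
      ≤ ⨍⁻ y in closedBall x t, (‖u y - u x‖ₑ + Λ * ENNReal.ofReal t * ‖u x - b‖ₑ) ∂μ := by
        refine setLAverage_mono_on measurableSet_closedBall fun y hy ↦ ?_
        have hsplit : ζ y • (u y - b) - ζ x • (u x - b) =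
            ζ y • (u y - u x) + (ζ y - ζ x) • (u x - b) := by module
        rw [hsplit]
        refine (enorm_add_le _ _).trans ?_
        rw [enorm_smul, enorm_smul, ← edist_eq_enorm_sub]
        gcongr
        · exact mul_le_of_le_one_left' (hζ1 y)
        · exact (hζ y x).trans (by gcongr; exact (edist_le_ofReal ht.le).2 hy)
    _ = ⨍⁻ y in closedBall x t, ‖u y - u x‖ₑ ∂μ + Λ * ENNReal.ofReal t * ‖u x - b‖ₑ :=
        setLAverage_add_const (measure_closedBall_pos μ x ht).ne' measure_closedBall_lt_top.ne _ _
    _ ≤ _ := by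
        rw [mul_add, mul_left_comm, mul_assoc]
        gcongr
        exact setLAverage_enorm_sub_le_mul_calderonMaximal ht u x

lemma calderonMaximal_smul_sub_le_of_mem_closedBall (hu : Continuous u) (hζ : LipschitzWith Λ ζ)
    (hζ1 : ∀ y, ‖ζ y‖ₑ ≤ 1) {x z : E} {R : ℝ≥0} (hx : x ∈ closedBall z R) :
    calderonMaximal μ (fun y ↦ ζ y • (u y - u z)) x ≤
      (1 + 2 ^ (finrank ℝ E + 1) * (Λ * R)) * (calderonMaximal μ u x + calderonMaximal μ u z) := by
  have hxz : edist x z ≤ R := by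
    rw [edist_nndist]
    exact mod_cast hx
  calc calderonMaximal μ (fun y ↦ ζ y • (u y - u z)) x
      ≤ calderonMaximal μ u x + Λ * ‖u x - u z‖ₑ := calderonMaximal_smul_sub_const_le hζ hζ1 u _ x
    _ ≤ (calderonMaximal μ u x + calderonMaximal μ u z) + Λ * (2 ^ (finrank ℝ E + 1) * R *
          (calderonMaximal μ u x + calderonMaximal μ u z)) := by
        gcongr
        · exact le_self_add
        · exact (enorm_sub_le_mul_edist_mul_add_calderonMaximal hu x z).trans (by gcongr)
    _ = _ := by ring

lemma setLIntegral_closedBall_calderonMaximal_smul_sub_rpow_le (hu : Continuous u)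
    (hζ : LipschitzWith Λ ζ) (hζ1 : ∀ y, ‖ζ y‖ₑ ≤ 1) {q : ℝ} (hq : 0 < q) (hq1 : q ≤ 1)
    {R : ℝ≥0} (hR : 0 < R) (z : E) :
    ∫⁻ x in closedBall z R, calderonMaximal μ (fun y ↦ ζ y • (u y - u z)) x ^ q ∂μ ≤
      (1 + 2 ^ (finrank ℝ E + 1) * (Λ * R)) ^ q * (2 * μ (closedBall z R)) *
        powMaximal μ q (calderonMaximal μ u) z ^ q := by
  set A : ℝ≥0∞ := 1 + 2 ^ (finrank ℝ E + 1) * (Λ * R)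
  set N := calderonMaximal μ u
  set M := powMaximal μ q N z
  have hNz : N z ≤ M :=
    le_powMaximal_of_lowerSemicontinuous hq (lowerSemicontinuous_calderonMaximal hu) z
  have haverage : ∫⁻ x in closedBall z R, N x ^ q ∂μ ≤ μ (closedBall z R) * M ^ q := by
    rw [← measure_mul_setLAverage _ measure_closedBall_lt_top.ne]
    gcongr
    exact setLAverage_rpow_le_powMaximal_rpow hq.ne' (by positivity) _ z
  calc ∫⁻ x in closedBall z R, calderonMaximal μ (fun y ↦ ζ y • (u y - u z)) x ^ q ∂μ
      ≤ ∫⁻ x in closedBall z R, A ^ q * (N x ^ q + M ^ q) ∂μ := by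
        refine setLIntegral_mono' measurableSet_closedBall fun x hx ↦ ?_
        refine (ENNReal.rpow_le_rpow
          (calderonMaximal_smul_sub_le_of_mem_closedBall hu hζ hζ1 hx) hq.le).trans ?_
        rw [ENNReal.mul_rpow_of_nonneg _ _ hq.le]
        gcongr
        exact (ENNReal.rpow_add_le_add_rpow _ _ hq.le hq1).trans (by gcongr)
    _ = A ^ q * (∫⁻ x in closedBall z R, N x ^ q ∂μ + μ (closedBall z R) * M ^ q) := by
        rw [lintegral_const_mul' _ _ (by finiteness), lintegral_add_right _ measurable_const,
          setLIntegral_const, mul_comm (M ^ q)]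
    _ ≤ A ^ q * (μ (closedBall z R) * M ^ q + μ (closedBall z R) * M ^ q) := by gcongr
    _ = _ := by ring

lemma exists_lintegral_calderonMaximal_smul_sub_rpow_le (F : Type*) [NormedAddCommGroup F]
    [NormedSpace ℝ F] (μ : Measure E) [μ.IsAddHaarMeasure] {q : ℝ}
    (hq : (finrank ℝ E : ℝ) / (finrank ℝ E + 1) < q) (hq1 : q ≤ 1) (L : ℝ≥0) :
    ∃ C : ℝ≥0, ∀ (u : E → F) (ζ : E → ℝ) (Λ ρ : ℝ≥0) (z : E), Continuous u → LipschitzWith Λ ζ →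
      Λ * ρ ≤ L → 0 < ρ → (∀ y, ‖ζ y‖ₑ ≤ 1) → (∀ y ∉ closedBall z ρ, ζ y = 0) →
        ∫⁻ x, calderonMaximal μ (fun y ↦ ζ y • (u y - u z)) x ^ q ∂μ ≤
          C * ρ ^ finrank ℝ E * powMaximal μ q (calderonMaximal μ u) z ^ q := by
  have hq0 : 0 < q := lt_of_le_of_lt (by positivity) hq
  have hvol : μ (closedBall (0 : E) 1) ≠ ∞ := measure_closedBall_lt_top.ne
  obtain ⟨C₀, hC₀⟩ := exists_setLIntegral_compl_calderonMaximal_rpow_le F μ hq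
  obtain ⟨C₁, hC₁⟩ : ∃ C₁ : ℝ≥0, C₁ = (1 + 2 ^ (finrank ℝ E + 1) * (L * 2 : ℝ≥0∞)) ^ q *
      (2 * (2 ^ finrank ℝ E * μ (closedBall 0 1))) := ⟨_, coe_toNNReal (by finiteness)⟩
  refine ⟨C₁ + C₀, fun u ζ Λ ρ z hu hζ hΛ hρ hζ1 hζ0 ↦ ?_⟩
  set M := powMaximal μ q (calderonMaximal μ u) z
  set w : E → F := fun y ↦ ζ y • (u y - u z)
  have hNz : calderonMaximal μ u z ≤ M :=
    le_powMaximal_of_lowerSemicontinuous hq0 (lowerSemicontinuous_calderonMaximal hu) z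
  have hnear : ∫⁻ x in closedBall z (2 * ρ), calderonMaximal μ w x ^ q ∂μ ≤
      C₁ * ρ ^ finrank ℝ E * M ^ q := by
    refine (setLIntegral_closedBall_calderonMaximal_smul_sub_rpow_le (R := 2 * ρ) hu hζ hζ1 hq0 hq1
      (by positivity) z).trans ?_
    rw [hC₁, Measure.addHaar_closedBall' μ z (by positivity), ofReal_pow (by positivity),
      ofReal_coe_nnreal, mul_comm 2 ρ, coe_mul, mul_pow, ← mul_assoc (Λ : ℝ≥0∞), coe_ofNat,
      mul_assoc (_ ^ q) _ (_ ^ finrank ℝ E)]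
    gcongr ?_ ^ q * ?_ * _
    · gcongr
      exact mod_cast hΛ
    · exact le_of_eq (by ring)
  have hfar : ∫⁻ x in (closedBall z (2 * ρ))ᶜ, calderonMaximal μ w x ^ q ∂μ ≤
      C₀ * ρ ^ finrank ℝ E * M ^ q := by
    refine (hC₀ w z ρ (by positivity) fun y hy ↦ by simp [w, hζ0 y hy]).trans ?_
    rw [ofReal_pow (by positivity), ofReal_coe_nnreal, ofReal_inv_of_pos (by positivity),
      ofReal_coe_nnreal]
    gcongr
    refine (ENNReal.inv_mul_le_iff (by positivity) coe_ne_top).2 ?_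
    refine (setLAverage_enorm_smul_sub_le_mul_calderonMaximal hζ1 (by positivity) u z).trans ?_
    rw [ofReal_coe_nnreal]
    gcongr
  calc ∫⁻ x, calderonMaximal μ w x ^ q ∂μ
      = ∫⁻ x in closedBall z (2 * ρ), calderonMaximal μ w x ^ q ∂μ +
          ∫⁻ x in (closedBall z (2 * ρ))ᶜ, calderonMaximal μ w x ^ q ∂μ :=
        (lintegral_add_compl _ measurableSet_closedBall).symm
    _ ≤ C₁ * ρ ^ finrank ℝ E * M ^ q + C₀ * ρ ^ finrank ℝ E * M ^ q := add_le_add hnear hfar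
    _ = _ := by push_cast; ring

lemma exists_contDiff_cutoff (E : Type*) [NormedAddCommGroup E] [NormedSpace ℝ E]
    [FiniteDimensional ℝ E] : ∃ L : ℝ≥0, ∀ (a : E) (r : ℝ≥0), 0 < r → ∃ ζ : E → ℝ,
      ContDiff ℝ (⊤ : ℕ∞) ζ ∧ LipschitzWith (L / r) ζ ∧ (∀ y, ‖ζ y‖ₑ ≤ 1) ∧
        (∀ y ∈ closedBall a r, ζ y = 1) ∧ ∀ y ∉ closedBall a (3 / 2 * r), ζ y = 0 := by
  let η : ContDiffBump (0 : E) := ⟨1, 3 / 2, one_pos, by norm_num⟩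
  obtain ⟨L, hL⟩ := (η.contDiff (n := 1)).lipschitzWith_of_hasCompactSupport
    η.hasCompactSupport one_ne_zero
  have hdist (a y : E) (r : ℝ≥0) : dist ((r : ℝ)⁻¹ • (y - a)) 0 = dist y a / r := by
    rw [dist_zero_right, norm_smul, norm_inv, NNReal.norm_eq, ← dist_eq_norm, div_eq_inv_mul]
  refine ⟨L, fun a r hr ↦ ⟨fun y ↦ η ((r : ℝ)⁻¹ • (y - a)), ?_, ?_, fun y ↦ ?_, fun y hy ↦ ?_,
    fun y hy ↦ ?_⟩⟩
  · exact η.contDiff.comp ((contDiff_id.sub contDiff_const).const_smul _)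
  · refine .of_dist_le_mul fun x y ↦ (hL.dist_le_mul _ _).trans_eq ?_
    rw [dist_smul₀, dist_sub_right, norm_inv, NNReal.norm_eq, NNReal.coe_div]
    ring
  · rw [Real.enorm_of_nonneg η.nonneg, ofReal_le_one]
    exact η.le_one
  · refine η.one_of_mem_closedBall ?_
    rw [mem_closedBall, hdist]
    exact div_le_one_of_le₀ hy r.2
  · refine η.zero_of_le_dist ?_
    rw [hdist]
    exact (le_div_iff₀ (by positivity)).2 (not_le.1 hy).le

end CutOff

section Capacity

variable {n : ℕ} {ψ : 𝔼 n → ℝ} {D : ℝ≥0} {q : ℝ}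

lemma hardyCap_le_sum_lintegral {K U : Set (𝔼 n)} {φ : 𝔼 n → ℝ} (hφ : ContDiff ℝ (⊤ : ℕ∞) φ)
    (hφ' : HasCompactSupport φ) (hφU : tsupport φ ⊆ U) (hφK : ∀ x ∈ K, 1 ≤ φ x) (ψ : 𝔼 n → ℝ)
    (q : ℝ) : hardyCap n ψ q K U ≤ ∑ j, ∫⁻ x, convMax n ψ φ j x ^ q :=
  sInf_le ⟨φ, hφ, hφ', hφU, hφK, rfl⟩

lemma IsMollifierWith.sum_lintegral_convMax_rpow_le (hψ : IsMollifierWith ψ D) (hq : 0 ≤ q)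
    {φ : 𝔼 n → ℝ} (hφ : ContDiff ℝ 1 φ) : ∑ j, ∫⁻ x, convMax n ψ φ j x ^ q ≤
      n * (D * volume (closedBall (0 : 𝔼 n) 1)) ^ q * ∫⁻ x, calderonMaximal volume φ x ^ q := by
  have hvol : volume (closedBall (0 : 𝔼 n) 1) ≠ ∞ := measure_closedBall_lt_top.ne
  have hterm (j : Fin n) : ∫⁻ x, convMax n ψ φ j x ^ q ≤
      (D * volume (closedBall (0 : 𝔼 n) 1)) ^ q * ∫⁻ x, calderonMaximal volume φ x ^ q := by
    rw [← lintegral_const_mul' _ _ (by finiteness)]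
    refine lintegral_mono fun x ↦ ?_
    rw [← ENNReal.mul_rpow_of_nonneg _ _ hq]
    exact ENNReal.rpow_le_rpow (hψ.convMax_le_mul_calderonMaximal hφ j x) hq
  refine (Finset.sum_le_sum fun j _ ↦ hterm j).trans_eq ?_
  rw [Finset.sum_const, Finset.card_univ, Fintype.card_fin, nsmul_eq_mul, mul_assoc]

lemma IsMollifierWith.enorm_rpow_mul_hardyCap_le (hψ : IsMollifierWith ψ D) (hq : 0 < q)
    {u ζ : 𝔼 n → ℝ} {K U : Set (𝔼 n)} (hu : ContDiff ℝ (⊤ : ℕ∞) u) (hζ : ContDiff ℝ (⊤ : ℕ∞) ζ)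
    (hζ' : HasCompactSupport ζ) (hζU : tsupport ζ ⊆ U) (hζK : ∀ y ∈ K, ζ y = 1)
    (huK : ∀ y ∈ K, u y = 0) (α : ℝ) :
    ‖α‖ₑ ^ q * hardyCap n ψ q K U ≤ n * (D * volume (closedBall (0 : 𝔼 n) 1)) ^ q *
      ∫⁻ x, calderonMaximal volume (fun y ↦ ζ y • (u y - α)) x ^ q := by
  obtain rfl | hα := eq_or_ne α 0
  · simp [hq]
  have hα0 : ‖α‖ₑ ^ q ≠ 0 := by simp [hα]
  -- The competitor in the capacity is `φ = ζ (1 - u / α)`.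
  set w : 𝔼 n → ℝ := fun y ↦ ζ y • (u y - α)
  set φ : 𝔼 n → ℝ := fun y ↦ (-α)⁻¹ • w y
  have hφ : ContDiff ℝ (⊤ : ℕ∞) φ := (hζ.smul (hu.sub contDiff_const)).const_smul _
  have hφζ : tsupport φ ⊆ tsupport ζ :=
    (tsupport_smul_subset_right (fun _ ↦ (-α)⁻¹) w).trans (tsupport_smul_subset_left ζ _)
  have hφK (y : 𝔼 n) (hy : y ∈ K) : 1 ≤ φ y := by simp [φ, w, hζK y hy, huK y hy, hα]
  have hcap := (hardyCap_le_sum_lintegral hφ (hζ'.of_isClosed_subset (isClosed_tsupport φ) hφζ)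
    (hφζ.trans hζU) hφK ψ q).trans (hψ.sum_lintegral_convMax_rpow_le hq.le (hφ.of_le (by simp)))
  have hφw : ∫⁻ x, calderonMaximal volume φ x ^ q ≤
      (‖α‖ₑ ^ q)⁻¹ * ∫⁻ x, calderonMaximal volume w x ^ q := by
    rw [← lintegral_const_mul' _ _ (by simpa using hα0)]
    refine lintegral_mono fun x ↦ ?_
    rw [← ENNReal.inv_rpow, ← ENNReal.mul_rpow_of_nonneg _ _ hq.le, ← enorm_inv hα, ← enorm_neg,
      ← inv_neg]
    exact ENNReal.rpow_le_rpow (calderonMaximal_const_smul_le _ w x) hq.le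
  calc ‖α‖ₑ ^ q * hardyCap n ψ q K U
      ≤ ‖α‖ₑ ^ q * (n * (D * volume (closedBall (0 : 𝔼 n) 1)) ^ q *
          ((‖α‖ₑ ^ q)⁻¹ * ∫⁻ x, calderonMaximal volume w x ^ q)) := by
        gcongr
        exact hcap.trans (by gcongr)
    _ = ‖α‖ₑ ^ q * (‖α‖ₑ ^ q)⁻¹ * (n * (D * volume (closedBall (0 : 𝔼 n) 1)) ^ q *
          ∫⁻ x, calderonMaximal volume w x ^ q) := by ring
    _ = _ := by rw [ENNReal.mul_inv_cancel hα0 (by finiteness), one_mul]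

lemma IsMollifierWith.exists_enorm_rpow_mul_hardyCap_le (hψ : IsMollifierWith ψ D)
    (hq : (n : ℝ) / (n + 1) < q) (hq1 : q ≤ 1) :
    ∃ C : ℝ≥0, ∀ (u : 𝔼 n → ℝ) (K : Set (𝔼 n)) (a z : 𝔼 n) (r : ℝ≥0), ContDiff ℝ (⊤ : ℕ∞) u →
      (∀ y ∈ K, u y = 0) → 0 < r → dist z a ≤ r →
        ‖u z‖ₑ ^ q * hardyCap n ψ q (K ∩ closedBall a r) (ball a (2 * r)) ≤
          C * r ^ n * powMaximal volume q (calderonMaximal volume u) z ^ q := by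
  have hq0 : 0 < q := lt_of_le_of_lt (by positivity) hq
  have hvol : volume (closedBall (0 : 𝔼 n) 1) ≠ ∞ := measure_closedBall_lt_top.ne
  obtain ⟨L, hL⟩ := exists_contDiff_cutoff (𝔼 n)
  obtain ⟨C, hC⟩ := exists_lintegral_calderonMaximal_smul_sub_rpow_le ℝ (volume : Measure (𝔼 n))
    (by simpa using hq) hq1 (3 * L)
  obtain ⟨B, hB⟩ : ∃ B : ℝ≥0, B = n * (D * volume (closedBall (0 : 𝔼 n) 1)) ^ q :=
    ⟨_, coe_toNNReal (by finiteness)⟩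
  refine ⟨B * C * 3 ^ n, fun u K a z r hu hK hr hz ↦ ?_⟩
  obtain ⟨ζ, hζ, hζL, hζ1, hζ_one, hζ_zero⟩ := hL a r hr
  have hζ_supp : tsupport ζ ⊆ closedBall a (3 / 2 * r) :=
    closure_minimal (fun y hy ↦ by_contra fun h ↦ hy (hζ_zero y h)) isClosed_closedBall
  have hcap := hψ.enorm_rpow_mul_hardyCap_le hq0 (K := K ∩ closedBall a r) (U := ball a (2 * r))
    hu hζ ((isCompact_closedBall _ _).of_isClosed_subset (isClosed_tsupport ζ) hζ_supp)
    (hζ_supp.trans (closedBall_subset_ball (by linarith [NNReal.coe_pos.2 hr])))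
    (fun y hy ↦ hζ_one y hy.2) (fun y hy ↦ hK y hy.1) (u z)
  have hsub : closedBall a (3 / 2 * r) ⊆ closedBall z (3 * r : ℝ≥0) := by
    refine closedBall_subset_closedBall' ?_
    rw [dist_comm, NNReal.coe_mul, NNReal.coe_ofNat]
    linarith
  have hint := hC u ζ (L / r) (3 * r) z hu.continuous hζL
    (le_of_eq (by field_simp)) (by positivity) hζ1
    fun y hy ↦ hζ_zero y fun h ↦ hy (hsub h)
  rw [← hB] at hcap
  refine hcap.trans ((mul_le_mul_right hint _).trans_eq ?_)
  rw [finrank_euclideanSpace_fin]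
  push_cast
  ring

end Capacity

section Hardy

variable {n : ℕ} {ψ : 𝔼 n → ℝ} {D : ℝ≥0} {q c : ℝ}

/-- Uniform `q`-fatness of `K` with constant `c`: at every scale and around each of its points, `K`
has Hardy `q`-capacity at least `c` times that of a ball, which scales like `r ^ (n - q)`. -/
def IsUniformlyFat (ψ : 𝔼 n → ℝ) (q c : ℝ) (K : Set (𝔼 n)) : Prop :=
  ∀ x ∈ K, ∀ r : ℝ, 0 < r →
    ENNReal.ofReal (c * r ^ ((n : ℝ) - q)) ≤ hardyCap n ψ q (K ∩ closedBall x r) (ball x (2 * r))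

lemma exists_notMem_infDist_frontier_eq_dist {E : Type*} [NormedAddCommGroup E] [NormedSpace ℝ E]
    [ProperSpace E] {Ω : Set E} (hΩ : IsOpen Ω) (hΩ' : Ω ≠ univ) {x : E} (hx : x ∈ Ω) :
    ∃ a ∉ Ω, infDist x (frontier Ω) = dist x a := by
  have hne : (frontier Ω).Nonempty := nonempty_frontier_iff.2 ⟨⟨x, hx⟩, hΩ'⟩
  obtain ⟨a, ha, h⟩ := isClosed_frontier.exists_infDist_eq_dist hne x
  exact ⟨a, (hΩ.frontier_eq ▸ ha).2, h⟩

lemma IsMollifierWith.exists_ofReal_div_dist_le (hψ : IsMollifierWith ψ D)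
    (hq : (n : ℝ) / (n + 1) < q) (hq1 : q ≤ 1) (hc : 0 < c) :
    ∃ C : ℝ≥0, ∀ (K : Set (𝔼 n)) (u : 𝔼 n → ℝ) (a x : 𝔼 n), IsUniformlyFat ψ q c K →
      ContDiff ℝ (⊤ : ℕ∞) u → (∀ y ∈ K, u y = 0) → a ∈ K → x ∉ K →
        ENNReal.ofReal (|u x| / dist x a) ≤
          C * powMaximal volume q (calderonMaximal volume u) x := by
  have hq0 : 0 < q := lt_of_le_of_lt (by positivity) hq
  obtain ⟨C, hC⟩ := hψ.exists_enorm_rpow_mul_hardyCap_le hq hq1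
  lift c to ℝ≥0 using hc.le
  norm_cast at hc
  refine ⟨(c⁻¹ * C) ^ q⁻¹, fun K u a x hK hu huK ha hx ↦ ?_⟩
  set P := powMaximal volume q (calderonMaximal volume u) x
  obtain ⟨r, hr⟩ : ∃ r, r = nndist x a := ⟨_, rfl⟩
  have hr0 : 0 < r := hr ▸ pos_iff_ne_zero.2 (nndist_eq_zero.not.2 fun h ↦ hx (h ▸ ha))
  have hcap : ((‖u x‖₊ ^ q * (c * (r ^ n / r ^ q)) : ℝ≥0) : ℝ≥0∞) ≤ C * r ^ n * P ^ q := by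
    have hfat := hK a ha r hr0
    rw [Real.rpow_sub (NNReal.coe_pos.2 hr0), Real.rpow_natCast] at hfat
    refine le_trans ?_ (hC u K a x r hu huK hr0 (by rw [hr, coe_nndist]))
    rw [coe_mul, coe_rpow_of_nonneg _ hq0.le, ← enorm_eq_nnnorm]
    gcongr
    refine hfat.trans' (le_of_eq ?_)
    rw [← ofReal_coe_nnreal]
    push_cast
    rfl
  rw [← coe_nndist, ← hr, ← Real.norm_eq_abs, ← coe_nnnorm, ← NNReal.coe_div, ofReal_coe_nnreal,
    ← ENNReal.rpow_le_rpow_iff hq0, ENNReal.mul_rpow_of_nonneg _ _ hq0.le,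
    ← coe_rpow_of_nonneg _ hq0.le, ← coe_rpow_of_nonneg _ hq0.le, NNReal.rpow_inv_rpow hq0.ne']
  calc (((‖u x‖₊ / r) ^ q : ℝ≥0) : ℝ≥0∞)
      = ((c * r ^ n)⁻¹ : ℝ≥0) * ((‖u x‖₊ ^ q * (c * (r ^ n / r ^ q)) : ℝ≥0) : ℝ≥0∞) := by
        rw [← coe_mul, NNReal.div_rpow]
        congr 1
        field_simp
    _ ≤ ((c * r ^ n)⁻¹ : ℝ≥0) * (C * r ^ n * P ^ q) := by gcongr
    _ = (((c * r ^ n)⁻¹ * (C * r ^ n) : ℝ≥0) : ℝ≥0∞) * P ^ q := by push_cast; ring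
    _ = ((c⁻¹ * C : ℝ≥0) : ℝ≥0∞) * P ^ q := by congr 2; field_simp

end Hardy

theorem hardy_inequality_of_uniformly_fat_complement_general {n : ℕ} {q p c : ℝ}
    (hq : (n : ℝ) / (n + 1) < q) (hqp : q < p) (hp : p ≤ 1) {ψ : 𝔼 n → ℝ} (hψ : ContDiff ℝ 2 ψ)
    (hψ_supp : tsupport ψ ⊆ ball 0 1) (hψ_int : ∫ x, ψ x = 1) (hc : 0 < c) :
    ∃ C : ℝ≥0∞, C ≠ ⊤ ∧ ∀ Ω : Set (𝔼 n), IsOpen Ω → Ω ≠ univ → IsUniformlyFat ψ q c Ωᶜ →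
      ∀ u : 𝔼 n → ℝ, ContDiff ℝ (⊤ : ℕ∞) u → HasCompactSupport u → tsupport u ⊆ Ω →
        ∫⁻ x in Ω, ENNReal.ofReal (|u x| / infDist x (frontier Ω)) ^ p ≤
          C * ∑ j : Fin n, ∫⁻ x, convMax n ψ u j x ^ p := by
  have hq0 : 0 < q := lt_of_le_of_lt (by positivity) hq
  have hp0 : 0 < p := hq0.trans hqp
  obtain ⟨D, hD⟩ := exists_isMollifierWith hψ hψ_supp hψ_int
  obtain ⟨A, hA⟩ := hD.exists_ofReal_div_dist_le hq (hqp.le.trans hp) hc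
  obtain ⟨B, hB⟩ := exists_lintegral_powMaximal_rpow_le (volume : Measure (𝔼 n)) hq0 hqp
  obtain ⟨H, hH⟩ := hD.exists_lintegral_calderonMaximal_rpow_le (hq.trans hqp) hp
  refine ⟨A ^ p * (B * H), by finiteness, fun Ω hΩ hΩ' hfat u hu hu' huΩ ↦ ?_⟩
  have hu1 : ContDiff ℝ 1 u := hu.of_le (by simp)
  have hpointwise (x : 𝔼 n) (hx : x ∈ Ω) : ENNReal.ofReal (|u x| / infDist x (frontier Ω)) ≤
      A * powMaximal volume q (calderonMaximal volume u) x := by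
    obtain ⟨a, ha, hxa⟩ := exists_notMem_infDist_frontier_eq_dist hΩ hΩ' hx
    rw [hxa]
    exact hA Ωᶜ u a x hfat hu (fun y hy ↦ image_eq_zero_of_notMem_tsupport fun h ↦ hy (huΩ h)) ha
      (not_not.2 hx)
  calc ∫⁻ x in Ω, ENNReal.ofReal (|u x| / infDist x (frontier Ω)) ^ p
      ≤ ∫⁻ x in Ω, (A * powMaximal volume q (calderonMaximal volume u) x) ^ p :=
        setLIntegral_mono' hΩ.measurableSet fun x hx ↦
          ENNReal.rpow_le_rpow (hpointwise x hx) hp0.le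
    _ ≤ ∫⁻ x, (A * powMaximal volume q (calderonMaximal volume u) x) ^ p :=
        setLIntegral_le_lintegral _ _
    _ = A ^ p * ∫⁻ x, powMaximal volume q (calderonMaximal volume u) x ^ p := by
        simp only [ENNReal.mul_rpow_of_nonneg _ _ hp0.le]
        exact lintegral_const_mul' _ _ (by finiteness)
    _ ≤ A ^ p * (B * (H * ∑ j, ∫⁻ x, convMax n ψ u j x ^ p)) := by
        gcongr
        refine (hB _ (lowerSemicontinuous_calderonMaximal hu.continuous).measurable).trans ?_
        gcongr
        refine (hH u hu1 hu').trans ?_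
        gcongr
        exact lintegral_gradMax_rpow_le hψ.continuous hu1 hu' hp0 hp
    _ = A ^ p * (B * H) * ∑ j, ∫⁻ x, convMax n ψ u j x ^ p := by ring

/-- **Theorem 4.4 (i).** A bounded domain `Ω ⊆ ℝⁿ` whose complement is uniformly
`q`-fat for some `q < p` carries the `p`-Hardy inequality for Hardy–Sobolev functions,
`n/(n+1) < q < p ≤ 1`. -/
theorem hardy_inequality_of_uniformly_fat_complement
    (n : ℕ) (hn : 1 ≤ n) (q p : ℝ) (hq : (n : ℝ) / (n + 1) < q) (hqp : q < p)
    (hp : p ≤ 1)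
    (ψ : EuclideanSpace ℝ (Fin n) → ℝ) (hψ : ContDiff ℝ (⊤ : ℕ∞) ψ)
    (hψsupp : tsupport ψ ⊆ ball 0 1) (hψint : ∫ x, ψ x = 1)
    (Ω : Set (EuclideanSpace ℝ (Fin n))) (hΩo : IsOpen Ω) (hΩc : IsConnected Ω)
    (hΩb : Bornology.IsBounded Ω) (c : ℝ) (hc : 0 < c)
    (hfat : ∀ x ∉ Ω, ∀ r : ℝ, 0 < r →
      ENNReal.ofReal (c * r ^ ((n : ℝ) - q)) ≤
        hardyCap n ψ q (Ωᶜ ∩ closedBall x r) (ball x (2 * r))) :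
    ∃ C : ℝ≥0∞, C ≠ ⊤ ∧
      ∀ u : EuclideanSpace ℝ (Fin n) → ℝ,
        ContDiff ℝ (⊤ : ℕ∞) u → HasCompactSupport u → tsupport u ⊆ Ω →
        ∫⁻ x in Ω, ENNReal.ofReal (|u x| / infDist x (frontier Ω)) ^ p ≤
          C * ∑ j : Fin n, ∫⁻ x, convMax n ψ u j x ^ p := by
  have : Nonempty (Fin n) := ⟨⟨0, hn⟩⟩
  have hΩ : Ω ≠ univ := fun h ↦ NormedSpace.unbounded_univ ℝ (EuclideanSpace ℝ (Fin n)) (h ▸ hΩb)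
  obtain ⟨C, hC, hC'⟩ := hardy_inequality_of_uniformly_fat_complement_general hq hqp hp
    (contDiff_infty.1 hψ 2) hψsupp hψint hc
  exact ⟨C, hC, hC' Ω hΩo hΩ hfat⟩
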